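/- There is a constant A > 0 such that for all integers q, h with 1 ≤ q ≤ h, |Σ_{0 < j ≤ h/q} (h − jq)·𝔖(jq) − h²/(2φ(q)) + (h/2)·log(h/q)| ≤ A·h·(log log 3q)³, where j runs over positive integers with jq ≤ h. -/

import Mathlib

open Finset ArithmeticFunction

/-- The Generalized Riemann Hypothesis for Dirichlet L-functions: every zero of a
Dirichlet L-function in the critical strip lies on the critical line. -/
def GRH : Prop :=
  ∀ (N : ℕ) [NeZero N] (χ : DirichletCharacter ℂ N) (s : ℂ),
    DirichletCharacter.LFunction χ s = 0 → 0 < s.re → s.re < 1 → s.re = 1 / 2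

/-- `ψ(x; q, a) = ∑_{n ≤ x, n ≡ a (mod q)} Λ(n)`. -/
noncomputable def psi (x : ℝ) (q a : ℕ) : ℝ :=
  ∑ n ∈ (Finset.Icc 1 ⌊x⌋₊).filter (fun n : ℕ => (n : ZMod q) = (a : ZMod q)),
    ArithmeticFunction.vonMangoldt n

/-- `I(x,h,q,a) = ∫_x^{2x} (ψ(y+h;q,a) − ψ(y;q,a) − h/φ(q))² dy`. -/
noncomputable def momentI (x h : ℝ) (q a : ℕ) : ℝ :=
  ∫ y in x..(2 * x), (psi (y + h) q a - psi y q a - h / (q.totient : ℝ)) ^ 2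

/-- `λ_R(n) = ∑_{r ≤ R} (μ²(r)/φ(r)) ∑_{d ∣ (r,n)} d·μ(d)`. -/
noncomputable def lamR (R : ℝ) (n : ℕ) : ℝ :=
  ∑ r ∈ Finset.Icc 1 ⌊R⌋₊,
    ((ArithmeticFunction.moebius r : ℝ) ^ 2 / (r.totient : ℝ)) *
      ∑ d ∈ (Nat.gcd r n).divisors, (d : ℝ) * (ArithmeticFunction.moebius d : ℝ)

/-- `c = γ + ∑_p (log p)/(p(p−1))`. -/
noncomputable def cGY : ℝ :=
  Real.eulerMascheroniConstant +
    ∑' p : Nat.Primes, Real.log (p : ℕ) / (((p : ℕ) : ℝ) * (((p : ℕ) : ℝ) - 1))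

/-- `v(k) = ∑_{p ∣ k} (log p)/p`. -/
noncomputable def vGY (k : ℕ) : ℝ := ∑ p ∈ k.primeFactors, Real.log p / (p : ℝ)

/-- `w(k) = ∏_{p ∣ k} (1 + 1/√p)`. -/
noncomputable def wGY (k : ℕ) : ℝ := ∏ p ∈ k.primeFactors, (1 + 1 / Real.sqrt p)

/-- `g(k) = ∏_{p ∣ k} (1 + p/(p−1))`. -/
noncomputable def gGY (k : ℕ) : ℝ := ∏ p ∈ k.primeFactors, (1 + (p : ℝ) / ((p : ℝ) - 1))

/-- The twin prime constant `C = ∏_{p > 2} (1 − 1/(p−1)²)`. -/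
noncomputable def twinC : ℝ :=
  ∏' p : Nat.Primes, (if 2 < (p : ℕ) then 1 - 1 / (((p : ℕ) : ℝ) - 1) ^ 2 else 1)

/-- The singular series `𝔖(k)`. -/
noncomputable def singSeries (k : ℕ) : ℝ :=
  if 2 ∣ k ∧ k ≠ 0 then
    2 * twinC * ∏ p ∈ k.primeFactors.filter (fun p => 2 < p), ((p : ℝ) - 1) / ((p : ℝ) - 2)
  else 0

/-- `f(n,x,h)`, the length of the interval `[x,2x] ∩ [n−h,n)`. -/
noncomputable def flen (n : ℕ) (x h : ℝ) : ℝ :=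
  if x ≤ n ∧ (n : ℝ) < x + h then (n : ℝ) - x
  else if x + h ≤ n ∧ (n : ℝ) ≤ 2 * x then h
  else if 2 * x < n ∧ (n : ℝ) ≤ 2 * x + h then 2 * x - n + h
  else 0

open scoped ArithmeticFunction.zeta ArithmeticFunction.Moebius

/-!
Let `q` be even and let `g` be the multiplicative function supported on the squarefree integers
prime to `q` with `g p = 1 / (p - 2)`. Then `𝔖(jq) = 2CP ∑_{d ∣ j} g d`, where `P` is the product of
`(p - 1) / (p - 2)` over the odd primes `p ∣ q`. With `x = h / q`, exchanging the sums over `j` and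
`d` leaves for each `d` the sum of `x - dm` over `m ≤ x / d`, which is `x² / (2d) - x / 2 + O(d)`.
The first term produces `h² / (2φ(q))` through the Euler product of `∑ g d / d`, the second one
`-(h / 2) log (h / q)`, because `2CP ∑_{d ≤ x} g d` is close to `log x`: putting the primes of `q`
back one at a time, each prime `p` changes the sum by terms from `(x / p, x]`, of total size
`O(log p)`. This costs an error `O(P (1 + ∑ log p / (p - 2)))`, which is `O((log log 3q)²)` by
Mertens' theorem. Since `𝔖` vanishes at odd numbers, the case of odd `q` reduces to that of `2q`.
-/

section DivisorSums

variable {M : Type*} [AddCommMonoid M]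

lemma sum_Ioc_sum_divisorsAntidiagonal (F : ℕ → ℕ → M) (N : ℕ) :
    ∑ n ∈ Ioc 0 N, ∑ x ∈ n.divisorsAntidiagonal, F x.1 x.2
      = ∑ d ∈ Ioc 0 N, ∑ m ∈ Ioc 0 (N / d), F d m := by
  calc ∑ n ∈ Ioc 0 N, ∑ x ∈ n.divisorsAntidiagonal, F x.1 x.2
      = ∑ n ∈ Ioc 0 N, ∑ x ∈ Ioc 0 N ×ˢ Ioc 0 N with x.1 * x.2 = n, F x.1 x.2 := by
        refine sum_congr rfl fun n hn ↦ ?_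
        rw [mem_Ioc] at hn
        rw [Nat.divisorsAntidiagonal_eq_prod_filter_of_le hn.1.ne' hn.2]
    _ = ∑ d ∈ Ioc 0 N, ∑ m ∈ Ioc 0 N with d * m ≤ N, F d m := by
        simp_rw [sum_filter]
        rw [sum_comm, sum_product]
        refine sum_congr rfl fun d hd ↦ sum_congr rfl fun m hm ↦ ?_
        rw [mem_Ioc] at hd hm
        simp [Nat.mul_pos hd.1 hm.1]
    _ = ∑ d ∈ Ioc 0 N, ∑ m ∈ Ioc 0 (N / d), F d m := by
        refine sum_congr rfl fun d hd ↦ sum_congr ?_ fun _ _ ↦ rfl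
        ext m
        rw [mem_Ioc] at hd
        simp only [mem_filter, mem_Ioc, Nat.le_div_iff_mul_le hd.1, mul_comm m d]
        have : d * m ≤ N → m ≤ N := (Nat.le_mul_of_pos_left m hd.1).trans
        tauto

lemma sum_Ioc_filter_dvd (F : ℕ → M) {d : ℕ} (hd : 0 < d) (N : ℕ) :
    ∑ n ∈ Ioc 0 N with d ∣ n, F n = ∑ m ∈ Ioc 0 (N / d), F (d * m) := by
  symm
  refine sum_nbij (d * ·) (fun m hm ↦ ?_) (fun _ _ _ _ h ↦ Nat.eq_of_mul_eq_mul_left hd h)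
    (fun n hn ↦ ?_) fun _ _ ↦ rfl
  · rw [mem_Ioc, Nat.le_div_iff_mul_le hd, mul_comm m] at hm
    simpa [hd] using hm
  · obtain ⟨hn, m, rfl⟩ := mem_filter.1 (mem_coe.1 hn)
    rw [mem_Ioc] at hn
    refine ⟨m, ?_, rfl⟩
    rw [mem_coe, mem_Ioc, Nat.le_div_iff_mul_le hd, mul_comm m]
    exact ⟨Nat.pos_of_mul_pos_left hn.1, hn.2⟩

end DivisorSums

section SquarefreeProd

variable {R : Type*} [CommSemiring R]

/-- The multiplicative function supported on the squarefree numbers that takes the value `w p` at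
every prime `p`. -/
def squarefreeProd (w : ℕ → R) : ArithmeticFunction R :=
  ⟨fun n ↦ if Squarefree n then ∏ p ∈ n.primeFactors, w p else 0, by simp⟩

lemma squarefreeProd_apply (w : ℕ → R) (n : ℕ) :
    squarefreeProd w n = if Squarefree n then ∏ p ∈ n.primeFactors, w p else 0 := rfl

lemma isMultiplicative_squarefreeProd (w : ℕ → R) : (squarefreeProd w).IsMultiplicative := by
  refine ⟨by simp [squarefreeProd_apply], fun {m n} hmn ↦ ?_⟩
  simp only [squarefreeProd_apply, Nat.squarefree_mul hmn, hmn.primeFactors_mul,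
    prod_union hmn.disjoint_primeFactors]
  split_ifs <;> simp_all

lemma squarefreeProd_prime (w : ℕ → R) {p : ℕ} (hp : p.Prime) : squarefreeProd w p = w p := by
  simp [squarefreeProd_apply, hp.prime.squarefree, hp.primeFactors]

lemma squarefreeProd_prime_pow (w : ℕ → R) {p : ℕ} (hp : p.Prime) (k : ℕ) :
    squarefreeProd w (p ^ (k + 2)) = 0 := by
  simp [squarefreeProd_apply, Nat.squarefree_pow_iff hp.ne_one]

lemma sum_divisors_squarefreeProd (w : ℕ → R) {n : ℕ} (hn : n ≠ 0) :
    ∑ d ∈ n.divisors, squarefreeProd w d = ∏ p ∈ n.primeFactors, (1 + w p) := by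
  simp only [squarefreeProd_apply]
  rw [← sum_filter, Nat.sum_divisors_filter_squarefree hn, prod_one_add, Nat.factors_eq]
  refine sum_congr rfl fun s hs ↦ ?_
  have hprime : ∀ p ∈ s, p.Prime := fun p hp ↦
    Nat.prime_of_mem_primeFactors (mem_powerset.1 hs hp)
  simp [prod_val, Nat.primeFactors_prod hprime]

lemma squarefreeProd_update_of_dvd (w : ℕ → R) {p n : ℕ} (hp : p.Prime) (hn : p ∣ n) :
    squarefreeProd (Function.update w p 0) n = 0 := by
  rw [squarefreeProd_apply]
  split_ifs with hsq
  · exact prod_eq_zero (Nat.mem_primeFactors.2 ⟨hp, hn, hsq.ne_zero⟩) (by simp)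
  · rfl

lemma squarefreeProd_update_of_not_dvd (w : ℕ → R) {p n : ℕ} (hn : ¬ p ∣ n) (a : R) :
    squarefreeProd (Function.update w p a) n = squarefreeProd w n := by
  simp only [squarefreeProd_apply]
  congr 1
  refine prod_congr rfl fun r hr ↦ Function.update_of_ne ?_ _ _
  rintro rfl
  exact hn (Nat.dvd_of_mem_primeFactors hr)

lemma squarefreeProd_prime_mul (w : ℕ → R) {p : ℕ} (hp : p.Prime) (m : ℕ) :
    squarefreeProd w (p * m) = w p * squarefreeProd (Function.update w p 0) m := by
  by_cases hm : p ∣ m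
  · rw [squarefreeProd_update_of_dvd w hp hm, mul_zero, squarefreeProd_apply, if_neg]
    intro hsq
    exact hp.not_isUnit (hsq p (mul_dvd_mul_left p hm))
  · rw [(isMultiplicative_squarefreeProd w).map_mul_of_coprime
      ((Nat.Prime.coprime_iff_not_dvd hp).2 hm), squarefreeProd_prime w hp,
      squarefreeProd_update_of_not_dvd w hm]

lemma sum_Ioc_squarefreeProd (w : ℕ → R) {p : ℕ} (hp : p.Prime) (N : ℕ) :
    ∑ n ∈ Ioc 0 N, squarefreeProd w n =
      ∑ n ∈ Ioc 0 N, squarefreeProd (Function.update w p 0) n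
        + w p * ∑ n ∈ Ioc 0 (N / p), squarefreeProd (Function.update w p 0) n := by
  have hsplit (n : ℕ) : squarefreeProd w n = squarefreeProd (Function.update w p 0) n
      + if p ∣ n then squarefreeProd w n else 0 := by
    split_ifs with hn
    · rw [squarefreeProd_update_of_dvd w hp hn, zero_add]
    · rw [squarefreeProd_update_of_not_dvd w hn, add_zero]
  rw [sum_congr rfl fun n _ ↦ hsplit n, sum_add_distrib, ← sum_filter,
    sum_Ioc_filter_dvd _ hp.pos, mul_sum]
  simp_rw [squarefreeProd_prime_mul w hp]

end SquarefreeProd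

lemma squarefreeProd_nonneg {w : ℕ → ℝ} (hw : ∀ p, p.Prime → 0 ≤ w p) (n : ℕ) :
    0 ≤ squarefreeProd w n := by
  rw [squarefreeProd_apply]
  split_ifs
  · exact prod_nonneg fun p hp ↦ hw p (Nat.prime_of_mem_primeFactors hp)
  · exact le_rfl

lemma squarefreeProd_mono {w w' : ℕ → ℝ} (hw : ∀ p, p.Prime → 0 ≤ w p)
    (hww' : ∀ p, p.Prime → w p ≤ w' p) (n : ℕ) : squarefreeProd w n ≤ squarefreeProd w' n := by
  simp only [squarefreeProd_apply]
  split_ifs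
  · exact prod_le_prod (fun p hp ↦ hw p (Nat.prime_of_mem_primeFactors hp))
      fun p hp ↦ hww' p (Nat.prime_of_mem_primeFactors hp)
  · exact le_rfl

lemma harmonic_sub_harmonic_div_nonneg (M k : ℕ) :
    (0 : ℝ) ≤ harmonic M - harmonic (M / k) := by
  have h : harmonic (M / k) ≤ harmonic M :=
    sum_le_sum_of_subset_of_nonneg (range_mono (Nat.div_le_self M k)) fun _ _ _ ↦ by positivity
  exact_mod_cast sub_nonneg.2 h

lemma harmonic_sub_harmonic_div_le (M : ℕ) {k : ℕ} (hk : k ≠ 0) :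
    (harmonic M - harmonic (M / k) : ℝ) ≤ 1 + Real.log k := by
  have hlogk : 0 ≤ Real.log k := Real.log_natCast_nonneg k
  rcases eq_or_ne M 0 with rfl | hM
  · simpa using by linarith
  have hupper := harmonic_le_one_add_log M
  have hlower := log_le_harmonic_floor (M / k : ℝ) (by positivity)
  rw [Nat.floor_div_eq_div, Real.log_div (by positivity) (by positivity)] at hlower
  linarith

lemma abs_harmonic_floor_sub_log_le {x : ℝ} (hx : Real.exp (-1) ≤ x) {d : ℕ} (hd : d ≠ 0) :
    |harmonic (⌊x⌋₊ / d) - Real.log x| ≤ 1 + Real.log d := by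
  have hx0 : 0 < x := (Real.exp_pos _).trans_le hx
  have hd0 : (0 : ℝ) < d := by positivity
  have hlogx : -1 ≤ Real.log x := (Real.le_log_iff_exp_le hx0).2 hx
  have hlogd : 0 ≤ Real.log d := Real.log_natCast_nonneg d
  rw [← Nat.floor_div_natCast, abs_le]
  rcases lt_or_ge x d with hxd | hxd
  · have hlog : Real.log x ≤ Real.log d := Real.log_le_log hx0 hxd.le
    have hfloor : ⌊x / d⌋₊ = 0 := Nat.floor_eq_zero.2 ((div_lt_one hd0).2 hxd)
    simp only [hfloor, harmonic_zero, Rat.cast_zero]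
    constructor <;> linarith
  · have hlower := log_le_harmonic_floor (x / d) (by positivity)
    have hupper := harmonic_floor_le_one_add_log (x / d) ((one_le_div hd0).2 hxd)
    rw [Real.log_div hx0.ne' hd0.ne'] at hlower hupper
    constructor <;> linarith

section MulZeta

variable {c : ArithmeticFunction ℝ}

lemma sum_Ioc_mul_zeta_le (hc : Summable fun n : ℕ ↦ |c n| / n) (N : ℕ) :
    ∑ n ∈ Ioc 0 N, (c * ζ) n ≤ (∑' n : ℕ, |c n| / n) * N := by
  calc ∑ n ∈ Ioc 0 N, (c * ζ) n = ∑ d ∈ Ioc 0 N, c d * ((N / d : ℕ) : ℝ) :=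
        sum_Ioc_mul_zeta_eq_sum c N
    _ ≤ ∑ d ∈ Ioc 0 N, |c d| / d * N := by
        refine sum_le_sum fun d _ ↦ ?_
        calc c d * ((N / d : ℕ) : ℝ) ≤ |c d| * (N / d : ℝ) := by
              gcongr
              · exact le_abs_self _
              · exact Nat.cast_div_le
          _ = |c d| / d * N := by ring
    _ = (∑ d ∈ Ioc 0 N, |c d| / d) * N := by rw [sum_mul]
    _ ≤ (∑' n : ℕ, |c n| / n) * N := by
        gcongr
        exact hc.sum_le_tsum _ fun _ _ ↦ by positivity

lemma sum_Ioc_mul_zeta_div (c : ArithmeticFunction ℝ) (N : ℕ) :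
    ∑ n ∈ Ioc 0 N, (c * ζ) n / n = ∑ d ∈ Ioc 0 N, c d / d * harmonic (N / d) := by
  calc ∑ n ∈ Ioc 0 N, (c * ζ) n / n
      = ∑ n ∈ Ioc 0 N, ∑ x ∈ n.divisorsAntidiagonal, c x.1 / x.1 * (x.2 : ℝ)⁻¹ := by
        refine sum_congr rfl fun n _ ↦ ?_
        rw [coe_mul_zeta_apply, ← Nat.sum_divisorsAntidiagonal fun d _ ↦ c d, sum_div]
        refine sum_congr rfl fun x hx ↦ ?_
        rw [← (Nat.mem_divisorsAntidiagonal.1 hx).1, Nat.cast_mul, div_mul_eq_div_div,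
          div_eq_mul_inv _ (x.2 : ℝ)]
    _ = ∑ d ∈ Ioc 0 N, ∑ m ∈ Ioc 0 (N / d), c d / d * (m : ℝ)⁻¹ :=
        sum_Ioc_sum_divisorsAntidiagonal (fun d m ↦ c d / d * (m : ℝ)⁻¹) N
    _ = ∑ d ∈ Ioc 0 N, c d / d * harmonic (N / d) := by
        refine sum_congr rfl fun d _ ↦ ?_
        rw [harmonic_eq_sum_Icc, ← mul_sum]
        push_cast
        rfl

lemma sum_Ioc_mul_zeta_div_sub_le (hc : Summable fun n : ℕ ↦ |c n| / n) (N : ℕ) {k : ℕ}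
    (hk : k ≠ 0) :
    ∑ n ∈ Ioc 0 N, (c * ζ) n / n - ∑ n ∈ Ioc 0 (N / k), (c * ζ) n / n
      ≤ (1 + Real.log k) * ∑' n : ℕ, |c n| / n := by
  have hextend : ∑ d ∈ Ioc 0 (N / k), c d / d * harmonic (N / k / d)
      = ∑ d ∈ Ioc 0 N, c d / d * harmonic (N / d / k) := by
    rw [← sum_subset (Ioc_subset_Ioc_right (Nat.div_le_self N k))]
    · exact sum_congr rfl fun d _ ↦ by rw [Nat.div_right_comm]
    · intro d hdN hdk
      rw [mem_Ioc] at hdN hdk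
      rw [Nat.div_right_comm, Nat.div_eq_of_lt (by omega : N / k < d)]
      simp
  rw [sum_Ioc_mul_zeta_div, sum_Ioc_mul_zeta_div, hextend, ← sum_sub_distrib]
  calc ∑ d ∈ Ioc 0 N, (c d / d * harmonic (N / d) - c d / d * harmonic (N / d / k))
      ≤ ∑ d ∈ Ioc 0 N, |c d| / d * (1 + Real.log k) := by
        refine sum_le_sum fun d _ ↦ ?_
        have hnonneg := harmonic_sub_harmonic_div_nonneg (N / d) k
        rw [← mul_sub]
        gcongr
        · exact le_abs_self _
        · exact harmonic_sub_harmonic_div_le _ hk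
    _ = (1 + Real.log k) * ∑ d ∈ Ioc 0 N, |c d| / d := by rw [← sum_mul, mul_comm]
    _ ≤ (1 + Real.log k) * ∑' n : ℕ, |c n| / n := by
        have := Real.log_natCast_nonneg k
        gcongr
        exact hc.sum_le_tsum _ fun _ _ ↦ by positivity

lemma abs_sum_Ioc_mul_zeta_div_sub_le
    (hc : Summable fun n : ℕ ↦ |c n| / n * (1 + Real.log n)) {x : ℝ} (hx : Real.exp (-1) ≤ x) :
    |∑ n ∈ Ioc 0 ⌊x⌋₊, (c * ζ) n / n - (∑' n : ℕ, c n / n) * Real.log x|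
      ≤ ∑' n : ℕ, |c n| / n * (1 + Real.log n) := by
  have hbound (n : ℕ) : ‖c n / n * (harmonic (⌊x⌋₊ / n) - Real.log x)‖
      ≤ |c n| / n * (1 + Real.log n) := by
    rcases eq_or_ne n 0 with rfl | hn
    · simp
    rw [norm_mul, norm_div, Real.norm_natCast, Real.norm_eq_abs, Real.norm_eq_abs]
    gcongr
    exact abs_harmonic_floor_sub_log_le hx hn
  have hsum : Summable fun n : ℕ ↦ c n / n := by
    refine hc.of_norm_bounded fun n ↦ ?_
    rw [norm_div, Real.norm_natCast, Real.norm_eq_abs]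
    exact le_mul_of_one_le_right (by positivity) (by simp [Real.log_natCast_nonneg])
  have hH : HasSum (fun n : ℕ ↦ c n / n * harmonic (⌊x⌋₊ / n))
      (∑ n ∈ Ioc 0 ⌊x⌋₊, c n / n * harmonic (⌊x⌋₊ / n)) := by
    refine hasSum_sum_of_ne_finset_zero fun n hn ↦ ?_
    rcases eq_or_ne n 0 with rfl | hn0
    · simp
    · rw [mem_Ioc] at hn
      rw [Nat.div_eq_of_lt (by omega)]
      simp
  have hdiff := hH.sub (hsum.hasSum.mul_right (Real.log x))
  simp only [← mul_sub] at hdiff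
  rw [sum_Ioc_mul_zeta_div, ← hdiff.tsum_eq, ← Real.norm_eq_abs]
  exact tsum_of_norm_bounded hc.hasSum hbound

end MulZeta

section WeightedDivisorSum

variable {c : ArithmeticFunction ℝ} {g : ℕ → ℝ}

lemma sum_Ioc_ite_lt_mul_inv_sq_le (N K : ℕ) {d : ℕ} (hd : d ≠ 0) :
    ∑ m ∈ Ioc 0 K, (if N < d * m then ((m : ℝ) ^ 2)⁻¹ else 0) ≤ 2 * d / (N + 1) := by
  rw [← sum_filter]
  calc ∑ m ∈ Ioc 0 K with N < d * m, ((m : ℝ) ^ 2)⁻¹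
      ≤ ∑ m ∈ Ioo (N / d) (K + 1), ((m : ℝ) ^ 2)⁻¹ := by
        refine sum_le_sum_of_subset_of_nonneg (fun m hm ↦ ?_) fun _ _ _ ↦ by positivity
        simp only [mem_filter, mem_Ioc, mem_Ioo] at hm ⊢
        rw [Nat.div_lt_iff_lt_mul (Nat.pos_of_ne_zero hd), mul_comm m]
        exact ⟨hm.2, by omega⟩
    _ ≤ 2 / ((N / d : ℕ) + 1) := sum_Ioo_inv_sq_le _ _
    _ ≤ 2 * d / (N + 1) := by
        have hlt : (N + 1 : ℝ) ≤ d * ((N / d : ℕ) + 1) := by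
          exact_mod_cast Nat.lt_mul_div_succ N (Nat.pos_of_ne_zero hd)
        rw [div_le_div_iff₀ (by positivity) (by positivity)]
        linarith

lemma sum_Ioc_mul_zeta_div_sq (c : ArithmeticFunction ℝ) (N M : ℕ) :
    ∑ n ∈ Ioc N M, (c * ζ) n / (n : ℝ) ^ 2 = ∑ d ∈ Ioc 0 M, c d / (d : ℝ) ^ 2 *
      ∑ m ∈ Ioc 0 (M / d), (if N < d * m then ((m : ℝ) ^ 2)⁻¹ else 0) := by
  have hIoc : Ioc N M = {n ∈ Ioc 0 M | N < n} := by
    ext n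
    simp only [mem_filter, mem_Ioc]
    omega
  simp_rw [mul_sum]
  rw [← sum_Ioc_sum_divisorsAntidiagonal fun d m ↦
    c d / (d : ℝ) ^ 2 * (if N < d * m then ((m : ℝ) ^ 2)⁻¹ else 0), hIoc, sum_filter]
  refine sum_congr rfl fun n _ ↦ ?_
  rw [coe_mul_zeta_apply, ← Nat.sum_divisorsAntidiagonal fun d _ ↦ c d, sum_div, ite_sum_zero]
  refine sum_congr rfl fun x hx ↦ ?_
  rw [← (Nat.mem_divisorsAntidiagonal.1 hx).1, mul_ite, mul_zero, Nat.cast_mul, mul_pow,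
    div_mul_eq_div_div, div_eq_mul_inv _ ((x.2 : ℝ) ^ 2)]

lemma sum_Ioc_mul_zeta_div_sq_le (hc : Summable fun n : ℕ ↦ |c n| / n) (N M : ℕ) :
    ∑ n ∈ Ioc N M, (c * ζ) n / (n : ℝ) ^ 2 ≤ 2 * (∑' n : ℕ, |c n| / n) / (N + 1) := by
  rw [sum_Ioc_mul_zeta_div_sq]
  calc ∑ d ∈ Ioc 0 M, c d / (d : ℝ) ^ 2 *
          ∑ m ∈ Ioc 0 (M / d), (if N < d * m then ((m : ℝ) ^ 2)⁻¹ else 0)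
    _ ≤ ∑ d ∈ Ioc 0 M, |c d| / d * (2 / (N + 1)) := by
        refine sum_le_sum fun d hd ↦ ?_
        have hd0 : d ≠ 0 := (mem_Ioc.1 hd).1.ne'
        calc c d / (d : ℝ) ^ 2 * ∑ m ∈ Ioc 0 (M / d), (if N < d * m then ((m : ℝ) ^ 2)⁻¹ else 0)
            ≤ |c d| / (d : ℝ) ^ 2 * (2 * d / (N + 1)) := by
              refine mul_le_mul ?_ (sum_Ioc_ite_lt_mul_inv_sq_le N _ hd0) ?_ (by positivity)
              · gcongr
                exact le_abs_self _
              · exact sum_nonneg fun _ _ ↦ by positivity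
          _ = |c d| / d * (2 / (N + 1)) := by field_simp
    _ = (∑ d ∈ Ioc 0 M, |c d| / d) * (2 / (N + 1)) := by rw [sum_mul]
    _ ≤ (∑' n : ℕ, |c n| / n) * (2 / (N + 1)) := by
        gcongr
        exact hc.sum_le_tsum _ fun _ _ ↦ by positivity
    _ = 2 * (∑' n : ℕ, |c n| / n) / (N + 1) := by ring

lemma sum_Ioc_div_le (hc : Summable fun n : ℕ ↦ |c n| / n) (hgc : ∀ n, n * g n ≤ (c * ζ) n)
    (N M : ℕ) : ∑ d ∈ Ioc N M, g d / d ≤ 2 * (∑' n : ℕ, |c n| / n) / (N + 1) := by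
  refine le_trans (sum_le_sum fun d hd ↦ ?_) (sum_Ioc_mul_zeta_div_sq_le hc N M)
  have hd0 : (0 : ℝ) < d := by exact_mod_cast (Nat.zero_le N).trans_lt (mem_Ioc.1 hd).1
  rw [div_le_div_iff₀ hd0 (by positivity)]
  nlinarith [hgc d]

lemma sum_range_div_le (hc : Summable fun n : ℕ ↦ |c n| / n) (hg : ∀ n, 0 ≤ g n)
    (hgc : ∀ n, n * g n ≤ (c * ζ) n) (N n : ℕ) :
    ∑ d ∈ range n, g d / d ≤ ∑ d ∈ Ioc 0 N, g d / d + 2 * (∑' n : ℕ, |c n| / n) / (N + 1) := by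
  calc ∑ d ∈ range n, g d / d ≤ ∑ d ∈ Icc 0 (N + n), g d / d :=
        sum_le_sum_of_subset_of_nonneg (fun d hd ↦ by simp at hd ⊢; omega)
          fun d _ _ ↦ div_nonneg (hg d) d.cast_nonneg
    _ = ∑ d ∈ Ioc 0 (N + n), g d / d := by
        rw [← add_sum_Ioc_eq_sum_Icc (Nat.zero_le _)]
        simp
    _ = ∑ d ∈ Ioc 0 N, g d / d + ∑ d ∈ Ioc N (N + n), g d / d :=
        (sum_Ioc_consecutive _ N.zero_le (N.le_add_right n)).symm
    _ ≤ _ := by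
        gcongr
        exact sum_Ioc_div_le hc hgc N _

lemma summable_div_of_mul_le_mul_zeta (hc : Summable fun n : ℕ ↦ |c n| / n) (hg : ∀ n, 0 ≤ g n)
    (hgc : ∀ n, n * g n ≤ (c * ζ) n) : Summable fun n : ℕ ↦ g n / n :=
  summable_of_sum_range_le (fun n ↦ div_nonneg (hg n) n.cast_nonneg) (sum_range_div_le hc hg hgc 0)

lemma tsum_div_le_sum_Ioc_add (hc : Summable fun n : ℕ ↦ |c n| / n) (hg : ∀ n, 0 ≤ g n)
    (hgc : ∀ n, n * g n ≤ (c * ζ) n) (N : ℕ) :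
    ∑' n : ℕ, g n / n ≤ ∑ n ∈ Ioc 0 N, g n / n + 2 * (∑' n : ℕ, |c n| / n) / (N + 1) :=
  Real.tsum_le_of_sum_range_le (fun n ↦ div_nonneg (hg n) n.cast_nonneg)
    (sum_range_div_le hc hg hgc N)

lemma exists_sum_Ioc_sub_mul_eq {x : ℝ} (hx : 0 ≤ x) {d : ℕ} (hd : d ≠ 0) :
    ∃ E : ℝ, 0 ≤ E ∧ E ≤ d ∧
      ∑ m ∈ Ioc 0 (⌊x⌋₊ / d), (x - d * m) = x ^ 2 / 2 * (1 / d) - x / 2 + E := by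
  have hd0 : (0 : ℝ) < d := by positivity
  have hgauss (M : ℕ) : ∑ m ∈ Ioc 0 M, (x - d * m) = M * x - d * (M * (M + 1) / 2) := by
    induction M with
    | zero => simp
    | succ M ih =>
      rw [sum_Ioc_succ_top M.zero_le, ih]
      push_cast
      ring
  rw [hgauss, ← Nat.floor_div_natCast]
  set y := x / d with hy
  have hxy : x = d * y := by rw [hy]; field_simp
  have hy0 : 0 ≤ y := by positivity
  have hfloor := Nat.floor_le hy0
  have hfloor' := Nat.lt_floor_add_one y
  refine ⟨d * ((y - ⌊y⌋₊) * (⌊y⌋₊ + 1 - y) / 2), ?_, ?_, ?_⟩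
  · exact mul_nonneg hd0.le (by nlinarith)
  · exact mul_le_of_le_one_right hd0.le (by nlinarith)
  · rw [hxy]
    field_simp
    ring

lemma sum_Ioc_sub_mul_sum_divisors (g : ℕ → ℝ) (x : ℝ) (N : ℕ) :
    ∑ j ∈ Ioc 0 N, (x - j) * ∑ d ∈ j.divisors, g d
      = ∑ d ∈ Ioc 0 N, g d * ∑ m ∈ Ioc 0 (N / d), (x - d * m) := by
  calc ∑ j ∈ Ioc 0 N, (x - j) * ∑ d ∈ j.divisors, g d
      = ∑ j ∈ Ioc 0 N, ∑ y ∈ j.divisorsAntidiagonal, g y.1 * (x - y.1 * y.2) := by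
        refine sum_congr rfl fun j _ ↦ ?_
        rw [← Nat.sum_divisorsAntidiagonal fun d _ ↦ g d, mul_sum]
        refine sum_congr rfl fun y hy ↦ ?_
        rw [← (Nat.mem_divisorsAntidiagonal.1 hy).1, Nat.cast_mul, mul_comm]
    _ = ∑ d ∈ Ioc 0 N, g d * ∑ m ∈ Ioc 0 (N / d), (x - d * m) := by
        rw [sum_Ioc_sum_divisorsAntidiagonal fun d m ↦ g d * (x - d * m)]
        simp_rw [mul_sum]

lemma sq_mul_tsum_div_sub_sum_Ioc_mem_Icc (hc : Summable fun n : ℕ ↦ |c n| / n)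
    (hg : ∀ n, 0 ≤ g n) (hgc : ∀ n, n * g n ≤ (c * ζ) n) {x : ℝ} (hx : 0 ≤ x) :
    x ^ 2 / 2 * (∑' d : ℕ, g d / d - ∑ d ∈ Ioc 0 ⌊x⌋₊, g d / d)
      ∈ Set.Icc 0 ((∑' n : ℕ, |c n| / n) * x) := by
  have hle : ∑ d ∈ Ioc 0 ⌊x⌋₊, g d / d ≤ ∑' d : ℕ, g d / d :=
    (summable_div_of_mul_le_mul_zeta hc hg hgc).sum_le_tsum _ fun d _ ↦
      div_nonneg (hg d) d.cast_nonneg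
  refine ⟨mul_nonneg (by positivity) (sub_nonneg.2 hle), ?_⟩
  set D := ∑' n : ℕ, |c n| / n
  calc x ^ 2 / 2 * (∑' d : ℕ, g d / d - ∑ d ∈ Ioc 0 ⌊x⌋₊, g d / d)
      ≤ x ^ 2 / 2 * (2 * D / (⌊x⌋₊ + 1)) := by
        gcongr
        linarith [tsum_div_le_sum_Ioc_add hc hg hgc ⌊x⌋₊]
    _ = D * x * (x / (⌊x⌋₊ + 1)) := by field_simp
    _ ≤ D * x := by
        refine mul_le_of_le_one_right (mul_nonneg (tsum_nonneg fun _ ↦ by positivity) hx) ?_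
        rw [div_le_one (by positivity)]
        exact (Nat.lt_floor_add_one x).le

lemma abs_sum_Ioc_sub_mul_sum_divisors_sub_le (hc : Summable fun n : ℕ ↦ |c n| / n)
    (hg : ∀ n, 0 ≤ g n) (hgc : ∀ n, n * g n ≤ (c * ζ) n) {x : ℝ} (hx : 0 ≤ x) :
    |∑ j ∈ Ioc 0 ⌊x⌋₊, (x - j) * ∑ d ∈ j.divisors, g d
        - (x ^ 2 / 2 * ∑' d : ℕ, g d / d - x / 2 * ∑ d ∈ Ioc 0 ⌊x⌋₊, g d)|
      ≤ (∑' n : ℕ, |c n| / n) * x := by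
  obtain ⟨htail_nonneg, htail_le⟩ := sq_mul_tsum_div_sub_sum_Ioc_mem_Icc hc hg hgc hx
  choose! E hE0 hEd hE using fun d (hd : d ≠ 0) ↦ exists_sum_Ioc_sub_mul_eq hx hd
  set N := ⌊x⌋₊
  have hsplit : ∑ j ∈ Ioc 0 N, (x - j) * ∑ d ∈ j.divisors, g d
      = x ^ 2 / 2 * ∑ d ∈ Ioc 0 N, g d / d - x / 2 * ∑ d ∈ Ioc 0 N, g d
        + ∑ d ∈ Ioc 0 N, g d * E d := by
    rw [sum_Ioc_sub_mul_sum_divisors, mul_sum, mul_sum, ← sum_sub_distrib, ← sum_add_distrib]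
    refine sum_congr rfl fun d hd ↦ ?_
    rw [hE d (mem_Ioc.1 hd).1.ne']
    ring
  have herror_nonneg : 0 ≤ ∑ d ∈ Ioc 0 N, g d * E d :=
    sum_nonneg fun d hd ↦ mul_nonneg (hg d) (hE0 d (mem_Ioc.1 hd).1.ne')
  have herror_le : ∑ d ∈ Ioc 0 N, g d * E d ≤ (∑' n : ℕ, |c n| / n) * x := by
    calc ∑ d ∈ Ioc 0 N, g d * E d ≤ ∑ d ∈ Ioc 0 N, (c * ζ) d := by
          refine sum_le_sum fun d hd ↦ le_trans ?_ (hgc d)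
          rw [mul_comm (d : ℝ)]
          exact mul_le_mul_of_nonneg_left (hEd d (mem_Ioc.1 hd).1.ne') (hg d)
      _ ≤ (∑' n : ℕ, |c n| / n) * N := sum_Ioc_mul_zeta_le hc N
      _ ≤ (∑' n : ℕ, |c n| / n) * x :=
          mul_le_mul_of_nonneg_left (Nat.floor_le hx) (tsum_nonneg fun _ ↦ by positivity)
  rw [hsplit, abs_le]
  constructor <;> linarith

end WeightedDivisorSum

section RemovePrimes

variable {w : ℕ → ℝ}

lemma piecewise_zero_nonneg (hw : ∀ p, p.Prime → 0 ≤ w p) (s : Finset ℕ) (p : ℕ) (hp : p.Prime) :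
    0 ≤ s.piecewise 0 w p := by
  by_cases h : p ∈ s <;> simp [h, hw p hp]

lemma piecewise_zero_le (hw : ∀ p, p.Prime → 0 ≤ w p) (s : Finset ℕ) (p : ℕ) (hp : p.Prime) :
    s.piecewise 0 w p ≤ w p := by
  by_cases h : p ∈ s <;> simp [h, hw p hp]

lemma sum_Ioc_squarefreeProd_piecewise_sub_mem_Icc (hw : ∀ p, p.Prime → 0 ≤ w p) (s : Finset ℕ)
    {M N : ℕ} (hMN : M ≤ N) :
    ∑ n ∈ Ioc 0 N, squarefreeProd (s.piecewise 0 w) n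
        - ∑ n ∈ Ioc 0 M, squarefreeProd (s.piecewise 0 w) n
      ∈ Set.Icc 0 (∑ n ∈ Ioc 0 N, squarefreeProd w n - ∑ n ∈ Ioc 0 M, squarefreeProd w n) := by
  simp only [← sum_Ioc_consecutive _ M.zero_le hMN, add_sub_cancel_left]
  exact ⟨sum_nonneg fun n _ ↦ squarefreeProd_nonneg (piecewise_zero_nonneg hw s) n,
    sum_le_sum fun n _ ↦
      squarefreeProd_mono (piecewise_zero_nonneg hw s) (piecewise_zero_le hw s) n⟩

lemma sum_Ioc_squarefreeProd_piecewise (w : ℕ → ℝ) {s : Finset ℕ} {p : ℕ} (hp : p.Prime)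
    (hps : p ∉ s) (N : ℕ) :
    ∑ n ∈ Ioc 0 N, squarefreeProd (s.piecewise 0 w) n
      = ∑ n ∈ Ioc 0 N, squarefreeProd ((insert p s).piecewise 0 w) n
        + w p * ∑ n ∈ Ioc 0 (N / p), squarefreeProd ((insert p s).piecewise 0 w) n := by
  rw [sum_Ioc_squarefreeProd (s.piecewise 0 w) hp N, piecewise_insert, Pi.zero_apply,
    piecewise_eq_of_notMem _ _ _ hps]

lemma prod_mul_sum_Ioc_squarefreeProd_piecewise_mem_Icc {b : ℕ → ℝ}
    (hw : ∀ p, p.Prime → 0 ≤ w p)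
    (hb : ∀ p N : ℕ, p.Prime → ∑ n ∈ Ioc 0 N, squarefreeProd w n
      - ∑ n ∈ Ioc 0 (N / p), squarefreeProd w n ≤ b p) (N : ℕ)
    {s : Finset ℕ} (hs : ∀ p ∈ s, p.Prime) :
    (∏ p ∈ s, (1 + w p)) * ∑ n ∈ Ioc 0 N, squarefreeProd (s.piecewise 0 w) n
        - ∑ n ∈ Ioc 0 N, squarefreeProd w n
      ∈ Set.Icc 0 ((∏ p ∈ s, (1 + w p)) * ∑ p ∈ s, w p * b p) := by
  have hb0 (p : ℕ) (hp : p.Prime) : 0 ≤ b p := by simpa using hb p 0 hp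
  induction s using Finset.induction with
  | empty => simp
  | insert p s hps ih =>
    obtain ⟨hp, hs⟩ := forall_mem_insert _ _ _ |>.1 hs
    obtain ⟨ih0, ihb⟩ := ih hs
    set P := ∏ r ∈ s, (1 + w r)
    set V := ∑ r ∈ s, w r * b r
    have hP : 0 ≤ P := prod_nonneg fun r hr ↦ by linarith [hw r (hs r hr)]
    have hV : 0 ≤ V := sum_nonneg fun r hr ↦ mul_nonneg (hw r (hs r hr)) (hb0 r (hs r hr))
    have hwp := hw p hp
    have hbp := hb0 p hp
    obtain ⟨hdiff0, hdiff⟩ :=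
      sum_Ioc_squarefreeProd_piecewise_sub_mem_Icc hw (insert p s) (Nat.div_le_self N p)
    have hsplit : (1 + w p) * P * ∑ n ∈ Ioc 0 N, squarefreeProd ((insert p s).piecewise 0 w) n
        - ∑ n ∈ Ioc 0 N, squarefreeProd w n
        = (P * ∑ n ∈ Ioc 0 N, squarefreeProd (s.piecewise 0 w) n
            - ∑ n ∈ Ioc 0 N, squarefreeProd w n)
          + P * w p * (∑ n ∈ Ioc 0 N, squarefreeProd ((insert p s).piecewise 0 w) n
            - ∑ n ∈ Ioc 0 (N / p), squarefreeProd ((insert p s).piecewise 0 w) n) := by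
      rw [sum_Ioc_squarefreeProd_piecewise w hp hps N]
      ring
    rw [prod_insert hps, sum_insert hps, hsplit]
    refine ⟨add_nonneg ih0 (mul_nonneg (mul_nonneg hP hwp) hdiff0), ?_⟩
    have hlast := mul_le_mul_of_nonneg_left (hdiff.trans (hb p N hp)) (mul_nonneg hP hwp)
    have hslack : 0 ≤ w p * P * (w p * b p + V) := by positivity
    linarith

end RemovePrimes

lemma summable_of_tsum_prime_pow_le {f b : ℕ → ℝ} (hf : ∀ n, 0 ≤ f n) (hf0 : f 0 = 0)
    (hf1 : f 1 = 1) (hmul : ∀ {m n}, Nat.Coprime m n → f (m * n) = f m * f n)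
    (hsum : ∀ {p : ℕ}, p.Prime → Summable fun k ↦ f (p ^ k)) (hb : Summable b) (hb0 : ∀ n, 0 ≤ b n)
    (hfb : ∀ {p : ℕ}, p.Prime → ∑' k, f (p ^ k) ≤ 1 + b p) : Summable f := by
  refine summable_of_sum_range_le (c := Real.exp (∑' n, b n)) hf fun N ↦ ?_
  obtain ⟨-, hprod⟩ := EulerProduct.summable_and_hasSum_smoothNumbers_prod_primesBelow_tsum
    hf1 hmul (fun hp ↦ by simpa only [Real.norm_of_nonneg (hf _)] using hsum hp) N
  have hrange : ∑ n ∈ range N, f n = ∑ n ∈ range N with n ∈ N.smoothNumbers, f n := by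
    refine (sum_filter_of_ne fun n hn hfn ↦ ?_).symm
    exact Nat.mem_smoothNumbers_of_lt (Nat.pos_of_ne_zero fun h ↦ hfn (h ▸ hf0)) (mem_range.1 hn)
  calc ∑ n ∈ range N, f n
      ≤ ∑' n : N.smoothNumbers, f n := by
        rw [hrange, ← sum_subtype_of_mem (p := (· ∈ N.smoothNumbers)) f (by simp)]
        exact hprod.summable.sum_le_tsum _ fun n _ ↦ hf n
    _ = ∏ p ∈ N.primesBelow, ∑' k, f (p ^ k) := hprod.tsum_eq
    _ ≤ ∏ p ∈ N.primesBelow, (1 + b p) :=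
        prod_le_prod (fun p _ ↦ tsum_nonneg fun k ↦ hf _)
          fun p hp ↦ hfb (Nat.prime_of_mem_primesBelow hp)
    _ ≤ Real.exp (∑ p ∈ N.primesBelow, b p) := Real.prod_one_add_le_exp_sum _ fun p ↦ hb0 p
    _ ≤ Real.exp (∑' n, b n) := Real.exp_le_exp.2 (hb.sum_le_tsum _ fun p _ ↦ hb0 p)

lemma hasSum_of_add_three_eq_zero {f : ℕ → ℝ} (hf : ∀ k, f (k + 3) = 0) :
    HasSum f (f 0 + f 1 + f 2) := by
  have hsupp : ∀ k ∉ range 3, f k = 0 := fun k hk ↦ by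
    obtain ⟨j, rfl⟩ := Nat.exists_eq_add_of_le' (not_lt.1 (mem_range.not.1 hk))
    exact hf j
  simpa [sum_range_succ] using hasSum_sum_of_ne_finset_zero (f := f) hsupp

section MoebiusTransform

lemma natCast_mul_squarefreeProd (w : ℕ → ℝ) (n : ℕ) :
    n * squarefreeProd w n = squarefreeProd (fun p ↦ p * w p) n := by
  simp only [squarefreeProd_apply, prod_mul_distrib]
  split_ifs with hn
  · rw [← Nat.cast_prod, Nat.prod_primeFactors_of_squarefree hn]
  · exact mul_zero _

/-- The Dirichlet quotient of `squarefreeProd v` by `ζ`. When `v p = 1 + O(1/p)` it is so small on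
average that sums of `squarefreeProd v` can be compared with sums of `ζ`. -/
noncomputable def squarefreeProdDivZeta (v : ℕ → ℝ) : ArithmeticFunction ℝ :=
  squarefreeProd v * ((μ : ArithmeticFunction ℤ) : ArithmeticFunction ℝ)

lemma squarefreeProdDivZeta_mul_zeta (v : ℕ → ℝ) :
    squarefreeProdDivZeta v * ζ = squarefreeProd v := by
  rw [squarefreeProdDivZeta, mul_assoc, coe_moebius_mul_coe_zeta, mul_one]

lemma isMultiplicative_squarefreeProdDivZeta (v : ℕ → ℝ) :
    (squarefreeProdDivZeta v).IsMultiplicative :=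
  (isMultiplicative_squarefreeProd v).mul isMultiplicative_moebius.intCast

lemma squarefreeProdDivZeta_prime_pow_succ (v : ℕ → ℝ) {p : ℕ} (hp : p.Prime) (k : ℕ) :
    squarefreeProdDivZeta v (p ^ (k + 1))
      = squarefreeProd v (p ^ (k + 1)) - squarefreeProd v (p ^ k) := by
  simp only [← squarefreeProdDivZeta_mul_zeta v, coe_mul_zeta_apply, Nat.sum_divisors_prime_pow hp,
    sum_range_succ _ (k + 1), add_sub_cancel_left]

lemma squarefreeProdDivZeta_prime (v : ℕ → ℝ) {p : ℕ} (hp : p.Prime) :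
    squarefreeProdDivZeta v p = v p - 1 := by
  simpa [squarefreeProd_prime v hp, (isMultiplicative_squarefreeProd v).map_one]
    using squarefreeProdDivZeta_prime_pow_succ v hp 0

lemma squarefreeProdDivZeta_prime_sq (v : ℕ → ℝ) {p : ℕ} (hp : p.Prime) :
    squarefreeProdDivZeta v (p ^ 2) = -v p := by
  simpa [squarefreeProd_prime v hp, squarefreeProd_prime_pow v hp 0]
    using squarefreeProdDivZeta_prime_pow_succ v hp 1

lemma squarefreeProdDivZeta_prime_pow (v : ℕ → ℝ) {p : ℕ} (hp : p.Prime) (k : ℕ) :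
    squarefreeProdDivZeta v (p ^ (k + 3)) = 0 := by
  rw [squarefreeProdDivZeta_prime_pow_succ v hp, squarefreeProd_prime_pow v hp k,
    squarefreeProd_prime_pow v hp (k + 1), sub_zero]

variable {v : ℕ → ℝ} {B : ℝ}

lemma sum_abs_squarefreeProdDivZeta_prime_pow_le {p : ℕ} (hp : p.Prime) (hv : |v p - 1| ≤ B / p) :
    |squarefreeProdDivZeta v p| * (p : ℝ) ^ (-(3 / 4) : ℝ)
        + |squarefreeProdDivZeta v (p ^ 2)| * ((p ^ 2 : ℕ) : ℝ) ^ (-(3 / 4) : ℝ)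
      ≤ (1 + 2 * B) * (p : ℝ) ^ (-(3 / 2) : ℝ) := by
  have hp1 : (1 : ℝ) ≤ p := by exact_mod_cast hp.one_le
  have hp0 : (0 : ℝ) < p := by linarith
  have hB : 0 ≤ B := by simpa using (le_div_iff₀ hp0).1 ((abs_nonneg _).trans hv)
  set t := (p : ℝ) ^ (-(3 / 4) : ℝ)
  have : 0 < t := Real.rpow_pos_of_pos hp0 _
  have hsq : (p : ℝ) ^ (-(3 / 2) : ℝ) = t * t := by
    rw [← Real.rpow_add hp0]
    norm_num
  have hsq' : ((p ^ 2 : ℕ) : ℝ) ^ (-(3 / 4) : ℝ) = t * t := by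
    rw [Nat.cast_pow, pow_two, Real.mul_rpow hp0.le hp0.le]
  have hinv : (p : ℝ)⁻¹ ≤ t := by
    rw [← Real.rpow_neg_one]
    exact Real.rpow_le_rpow_of_exponent_le hp1 (by norm_num)
  have hfirst : |v p - 1| ≤ B * t := hv.trans (by rw [div_eq_mul_inv]; gcongr)
  have hsecond : |v p| ≤ 1 + B := by
    have hBp : B / p ≤ B := div_le_self hB hp1
    have htri := abs_sub_abs_le_abs_sub (v p) 1
    rw [abs_one] at htri
    linarith
  rw [squarefreeProdDivZeta_prime v hp, squarefreeProdDivZeta_prime_sq v hp, abs_neg, hsq, hsq']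
  calc |v p - 1| * t + |v p| * (t * t) ≤ B * t * t + (1 + B) * (t * t) := by gcongr
    _ = (1 + 2 * B) * (t * t) := by ring

lemma summable_abs_squarefreeProdDivZeta_mul_rpow
    (hv : ∀ p : ℕ, p.Prime → |v p - 1| ≤ B / p) :
    Summable fun n : ℕ ↦ |squarefreeProdDivZeta v n| * (n : ℝ) ^ (-(3 / 4) : ℝ) := by
  have hmult := isMultiplicative_squarefreeProdDivZeta v
  have hB : 0 ≤ 1 + 2 * B := by
    have h2 : 0 ≤ B / 2 := (abs_nonneg _).trans (hv 2 Nat.prime_two)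
    linarith
  have hpow {p : ℕ} (hp : p.Prime) := hasSum_of_add_three_eq_zero
    (f := fun k ↦ |squarefreeProdDivZeta v (p ^ k)| * ((p ^ k : ℕ) : ℝ) ^ (-(3 / 4) : ℝ))
    fun k ↦ by simp [squarefreeProdDivZeta_prime_pow v hp]
  refine summable_of_tsum_prime_pow_le (b := fun n ↦ (1 + 2 * B) * (n : ℝ) ^ (-(3 / 2) : ℝ))
    (fun n ↦ by positivity) (by simp) (by simp [hmult.map_one]) (fun {m n} hmn ↦ ?_)
    (fun hp ↦ (hpow hp).summable) ((Real.summable_nat_rpow.2 (by norm_num)).mul_left _)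
    (fun n ↦ by positivity) fun {p} hp ↦ ?_
  · rw [hmult.map_mul_of_coprime hmn, abs_mul, Nat.cast_mul,
      Real.mul_rpow m.cast_nonneg n.cast_nonneg]
    ring
  · have hle := sum_abs_squarefreeProdDivZeta_prime_pow_le hp (hv p hp)
    rw [(hpow hp).tsum_eq]
    simp only [pow_zero, pow_one, hmult.map_one, abs_one, Nat.cast_one, Real.one_rpow, one_mul]
    linarith

lemma one_add_log_le_rpow {n : ℕ} (hn : n ≠ 0) :
    1 + Real.log n ≤ 5 * (n : ℝ) ^ (1 / 4 : ℝ) := by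
  have hlog := Real.log_le_rpow_div n.cast_nonneg (by norm_num : (0 : ℝ) < 1 / 4)
  have hone : 1 ≤ (n : ℝ) ^ (1 / 4 : ℝ) :=
    Real.one_le_rpow (by exact_mod_cast Nat.one_le_iff_ne_zero.2 hn) (by norm_num)
  linarith

lemma summable_abs_squarefreeProdDivZeta_div_mul_log
    (hv : ∀ p : ℕ, p.Prime → |v p - 1| ≤ B / p) :
    Summable fun n : ℕ ↦ |squarefreeProdDivZeta v n| / n * (1 + Real.log n) := by
  have hlog (n : ℕ) : 0 ≤ Real.log n := Real.log_natCast_nonneg n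
  refine Summable.of_nonneg_of_le (fun n ↦ mul_nonneg (by positivity) (by linarith [hlog n]))
    (fun n ↦ ?_) ((summable_abs_squarefreeProdDivZeta_mul_rpow hv).mul_left 5)
  rcases eq_or_ne n 0 with rfl | hn
  · simp
  have hn0 : (0 : ℝ) < n := by positivity
  calc |squarefreeProdDivZeta v n| / n * (1 + Real.log n)
      ≤ |squarefreeProdDivZeta v n| / n * (5 * (n : ℝ) ^ (1 / 4 : ℝ)) := by
        gcongr
        exact one_add_log_le_rpow hn
    _ = 5 * (|squarefreeProdDivZeta v n| * ((n : ℝ) ^ (-1 : ℝ) * (n : ℝ) ^ (1 / 4 : ℝ))) := by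
        rw [Real.rpow_neg_one]
        ring
    _ = 5 * (|squarefreeProdDivZeta v n| * (n : ℝ) ^ (-(3 / 4) : ℝ)) := by
        rw [← Real.rpow_add hn0]
        norm_num

lemma summable_abs_squarefreeProdDivZeta_div (hv : ∀ p : ℕ, p.Prime → |v p - 1| ≤ B / p) :
    Summable fun n : ℕ ↦ |squarefreeProdDivZeta v n| / n :=
  Summable.of_nonneg_of_le (fun n ↦ by positivity)
    (fun n ↦ le_mul_of_one_le_right (by positivity) (by simp [Real.log_natCast_nonneg]))
    (summable_abs_squarefreeProdDivZeta_div_mul_log hv)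

end MoebiusTransform

section EulerProduct

variable {w v : ℕ → ℝ}

lemma hasSum_squarefreeProd_prime_pow_div (w : ℕ → ℝ) {p : ℕ} (hp : p.Prime) :
    HasSum (fun k ↦ squarefreeProd w (p ^ k) / ((p ^ k : ℕ) : ℝ)) (1 + w p / p) := by
  simpa [squarefreeProd_prime w hp, squarefreeProd_prime_pow w hp 0,
    (isMultiplicative_squarefreeProd w).map_one] using hasSum_of_add_three_eq_zero
      (f := fun k ↦ squarefreeProd w (p ^ k) / ((p ^ k : ℕ) : ℝ))
      fun k ↦ by rw [squarefreeProd_prime_pow w hp (k + 1), zero_div]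

lemma hasSum_squarefreeProdDivZeta_prime_pow_div (v : ℕ → ℝ) {p : ℕ} (hp : p.Prime) :
    HasSum (fun k ↦ squarefreeProdDivZeta v (p ^ k) / ((p ^ k : ℕ) : ℝ))
      ((1 - (p : ℝ)⁻¹) * (1 + v p / p)) := by
  have hp0 : (p : ℝ) ≠ 0 := by exact_mod_cast hp.ne_zero
  have hsum := hasSum_of_add_three_eq_zero
    (f := fun k ↦ squarefreeProdDivZeta v (p ^ k) / ((p ^ k : ℕ) : ℝ))
    fun k ↦ by rw [squarefreeProdDivZeta_prime_pow v hp k, zero_div]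
  convert hsum using 1
  simp only [pow_zero, pow_one, (isMultiplicative_squarefreeProdDivZeta v).map_one, Nat.cast_one,
    squarefreeProdDivZeta_prime v hp, squarefreeProdDivZeta_prime_sq v hp, Nat.cast_pow]
  field_simp
  ring

lemma hasProd_tsum_prime_pow_div {f : ArithmeticFunction ℝ}
    (hf : f.IsMultiplicative) (hsum : Summable fun n : ℕ ↦ |f n| / n) :
    HasProd (fun p : Nat.Primes ↦ ∑' k, f (p ^ k) / ((p ^ k : ℕ) : ℝ)) (∑' n : ℕ, f n / n) := by
  refine EulerProduct.eulerProduct_hasProd (f := fun n : ℕ ↦ f n / n) (by simp [hf.map_one])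
    (fun {m n} hmn ↦ ?_) (by simpa [abs_div] using hsum) (by simp)
  rw [hf.map_mul_of_coprime hmn, Nat.cast_mul, mul_div_mul_comm]

lemma hasProd_one_add_div (hsum : Summable fun n : ℕ ↦ |squarefreeProd w n| / n) :
    HasProd (fun p : Nat.Primes ↦ 1 + w p / p) (∑' n : ℕ, squarefreeProd w n / n) := by
  convert hasProd_tsum_prime_pow_div (isMultiplicative_squarefreeProd w) hsum using 2 with p
  exact (hasSum_squarefreeProd_prime_pow_div w p.2).tsum_eq.symm

lemma hasProd_one_sub_inv_mul_one_add_div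
    (hsum : Summable fun n : ℕ ↦ |squarefreeProdDivZeta v n| / n) :
    HasProd (fun p : Nat.Primes ↦ (1 - (p : ℝ)⁻¹) * (1 + v p / p))
      (∑' n : ℕ, squarefreeProdDivZeta v n / n) := by
  convert hasProd_tsum_prime_pow_div (isMultiplicative_squarefreeProdDivZeta v) hsum using 2 with p
  exact (hasSum_squarefreeProdDivZeta_prime_pow_div v p.2).tsum_eq.symm

lemma prod_mul_tsum_squarefreeProd_piecewise_div (hw : ∀ p, p.Prime → 0 ≤ w p)
    (hsum : Summable fun n : ℕ ↦ |squarefreeProd w n| / n) {s : Finset ℕ}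
    (hs : ∀ p ∈ s, p.Prime) :
    (∏ p ∈ s, (1 + w p / p)) * ∑' n : ℕ, squarefreeProd (s.piecewise 0 w) n / n
      = ∑' n : ℕ, squarefreeProd w n / n := by
  have hsum' : Summable fun n : ℕ ↦ |squarefreeProd (s.piecewise 0 w) n| / n := by
    refine Summable.of_nonneg_of_le (fun n ↦ by positivity) (fun n ↦ ?_) hsum
    rw [abs_of_nonneg (squarefreeProd_nonneg (piecewise_zero_nonneg hw s) n),
      abs_of_nonneg (squarefreeProd_nonneg hw n)]
    gcongr
    exact squarefreeProd_mono (piecewise_zero_nonneg hw s) (piecewise_zero_le hw s) n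
  have hremoved : HasProd (fun p : Nat.Primes ↦ if (p : ℕ) ∈ s then 1 + w p / p else 1)
      (∏ p ∈ s, (1 + w p / p)) := by
    have hprod := hasProd_prod_of_ne_finset_one (s := s.subtype Nat.Prime)
      (f := fun p : Nat.Primes ↦ if (p : ℕ) ∈ s then 1 + w p / p else 1)
      (L := SummationFilter.unconditional _) fun p hp ↦ if_neg (mem_subtype.not.1 hp)
    convert hprod using 1
    rw [← prod_subtype_of_mem (fun p : ℕ ↦ 1 + w p / p) hs]
    exact prod_congr rfl fun p hp ↦ (if_pos (mem_subtype.1 hp)).symm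
  refine (hremoved.mul (hasProd_one_add_div hsum')).unique ?_
  convert hasProd_one_add_div hsum using 2 with p
  by_cases hp : (p : ℕ) ∈ s <;> simp [hp]

end EulerProduct

section TwinWeight

/-- The weight `1 / (p - 2)`, for which `1 + twinWeight p = (p - 1) / (p - 2)` is the local factor
of the singular series at `p > 2`. By `0⁻¹ = 0` it vanishes at `p = 2`, so that the factor there
is `1`, as in the singular series. -/
noncomputable def twinWeight (p : ℕ) : ℝ := ((p : ℝ) - 2)⁻¹

lemma twinWeight_two : twinWeight 2 = 0 := by simp [twinWeight]

lemma twinWeight_nonneg {p : ℕ} (hp : p.Prime) : 0 ≤ twinWeight p := by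
  have hp2 : (2 : ℝ) ≤ p := by exact_mod_cast hp.two_le
  exact inv_nonneg.2 (by linarith)

lemma abs_mul_twinWeight_sub_one_le {p : ℕ} (hp : p.Prime) : |p * twinWeight p - 1| ≤ 6 / p := by
  rcases hp.eq_two_or_odd' with rfl | hodd
  · norm_num [twinWeight_two]
  have hne : p ≠ 2 := by
    rintro rfl
    exact absurd hodd (by decide)
  have hp3 : (3 : ℝ) ≤ p := by exact_mod_cast hp.two_le.lt_of_ne' hne
  have hp2 : (0 : ℝ) < p - 2 := by linarith
  have heq : p * twinWeight p - 1 = 2 / (p - 2) := by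
    rw [twinWeight]
    field_simp
    ring
  rw [heq, abs_of_pos (by positivity), div_le_div_iff₀ hp2 (by linarith)]
  linarith

lemma twinWeight_le {p : ℕ} (hp : p.Prime) : twinWeight p ≤ 1 / p + 6 / (p : ℝ) ^ 2 := by
  have hp0 : (0 : ℝ) < p := by exact_mod_cast hp.pos
  have hle := (abs_le.1 (abs_mul_twinWeight_sub_one_le hp)).2
  calc twinWeight p = (p * twinWeight p - 1 + 1) / p := by field_simp; ring
    _ ≤ (6 / p + 1) / p := by gcongr
    _ = 1 / p + 6 / (p : ℝ) ^ 2 := by field_simp; ring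

lemma twinWeight_le_four_div {p : ℕ} (hp : p.Prime) : twinWeight p ≤ 4 / p := by
  have hp2 : (2 : ℝ) ≤ p := by exact_mod_cast hp.two_le
  refine (twinWeight_le hp).trans ?_
  calc 1 / p + 6 / (p : ℝ) ^ 2 ≤ 1 / p + 6 / (2 * p) := by
        rw [pow_two]
        gcongr
    _ = 4 / p := by ring

/-- The Dirichlet quotient by `ζ` of `n ↦ n * squarefreeProd twinWeight n`, through which the sums
of `squarefreeProd twinWeight` are compared with harmonic sums. -/
noncomputable def twinCoeff : ArithmeticFunction ℝ :=
  squarefreeProdDivZeta fun p ↦ p * twinWeight p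

lemma summable_abs_twinCoeff_div_mul_log :
    Summable fun n : ℕ ↦ |twinCoeff n| / n * (1 + Real.log n) :=
  summable_abs_squarefreeProdDivZeta_div_mul_log fun _ ↦ abs_mul_twinWeight_sub_one_le

lemma summable_abs_twinCoeff_div : Summable fun n : ℕ ↦ |twinCoeff n| / n :=
  summable_abs_squarefreeProdDivZeta_div fun _ ↦ abs_mul_twinWeight_sub_one_le

lemma twinCoeff_mul_zeta (n : ℕ) : (twinCoeff * ζ) n = n * squarefreeProd twinWeight n := by
  rw [twinCoeff, squarefreeProdDivZeta_mul_zeta, natCast_mul_squarefreeProd]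

lemma sum_Ioc_twinCoeff_mul_zeta_div (N : ℕ) :
    ∑ n ∈ Ioc 0 N, (twinCoeff * ζ) n / n = ∑ n ∈ Ioc 0 N, squarefreeProd twinWeight n := by
  refine sum_congr rfl fun n hn ↦ ?_
  have hn0 : (n : ℝ) ≠ 0 := by exact_mod_cast (mem_Ioc.1 hn).1.ne'
  rw [twinCoeff_mul_zeta, mul_div_cancel_left₀ _ hn0]

/-- The multiplicative function `g` supported on the squarefree integers without prime factor in
`s`, for which the local factors of `𝔖(j)` outside `s` multiply to `∑ d ∈ j.divisors, g d`. -/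
noncomputable def twinSieve (s : Finset ℕ) : ArithmeticFunction ℝ :=
  squarefreeProd (s.piecewise 0 twinWeight)

lemma twinSieve_nonneg (s : Finset ℕ) (n : ℕ) : 0 ≤ twinSieve s n :=
  squarefreeProd_nonneg (piecewise_zero_nonneg (fun _ ↦ twinWeight_nonneg) s) n

lemma natCast_mul_twinSieve_le (s : Finset ℕ) (n : ℕ) :
    n * twinSieve s n ≤ (twinCoeff * ζ) n := by
  rw [twinCoeff_mul_zeta]
  gcongr
  exact squarefreeProd_mono (piecewise_zero_nonneg (fun _ ↦ twinWeight_nonneg) s)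
    (piecewise_zero_le (fun _ ↦ twinWeight_nonneg) s) n

lemma summable_abs_squarefreeProd_twinWeight_div :
    Summable fun n : ℕ ↦ |squarefreeProd twinWeight n| / n := by
  have hnonneg := squarefreeProd_nonneg (w := twinWeight) fun _ ↦ twinWeight_nonneg
  simp only [abs_of_nonneg (hnonneg _)]
  exact summable_div_of_mul_le_mul_zeta summable_abs_twinCoeff_div hnonneg
    fun n ↦ (twinCoeff_mul_zeta n).ge

lemma one_add_twinWeight_div_inv {p : ℕ} (hp : p.Prime) :
    (1 + twinWeight p / p)⁻¹ = if 2 < p then 1 - 1 / ((p : ℝ) - 1) ^ 2 else 1 := by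
  split_ifs with h
  · have hp3 : (3 : ℝ) ≤ p := by exact_mod_cast h
    have hp0 : (p : ℝ) ≠ 0 := by linarith
    have hp1 : (p : ℝ) - 1 ≠ 0 := by linarith
    have hp2 : (p : ℝ) - 2 ≠ 0 := by linarith
    have heq : 1 + twinWeight p / p = ((p : ℝ) - 1) ^ 2 / (p * (p - 2)) := by
      rw [twinWeight]
      field_simp
      ring
    rw [heq, inv_div]
    field_simp
    ring
  · simp [le_antisymm (not_lt.1 h) hp.two_le, twinWeight_two]

lemma one_sub_inv_mul_one_add_twinWeight {p : ℕ} (hp : p.Prime) :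
    (1 - (p : ℝ)⁻¹) * (1 + twinWeight p) = (1 + twinWeight p / p) * if p = 2 then 2⁻¹ else 1 := by
  split_ifs with h
  · subst h
    norm_num [twinWeight_two]
  · have hp3 : (3 : ℝ) ≤ p := by exact_mod_cast hp.two_le.lt_of_ne' h
    have hp2 : (p : ℝ) - 2 ≠ 0 := by linarith
    rw [twinWeight]
    field_simp
    ring

lemma tsum_squarefreeProd_twinWeight_div_pos : 0 < ∑' n : ℕ, squarefreeProd twinWeight n / n := by
  have hnonneg (n : ℕ) : 0 ≤ squarefreeProd twinWeight n / n :=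
    div_nonneg (squarefreeProd_nonneg (fun _ ↦ twinWeight_nonneg) n) n.cast_nonneg
  refine Summable.tsum_pos (.of_norm ?_) hnonneg 1 ?_
  · simpa [abs_div] using summable_abs_squarefreeProd_twinWeight_div
  · simp [(isMultiplicative_squarefreeProd twinWeight).map_one]

lemma twinC_eq_inv_tsum : twinC = (∑' n : ℕ, squarefreeProd twinWeight n / n)⁻¹ := by
  rw [twinC, ← ((hasProd_one_add_div summable_abs_squarefreeProd_twinWeight_div).inv₀
    tsum_squarefreeProd_twinWeight_div_pos.ne').tprod_eq]
  exact tprod_congr fun p ↦ (one_add_twinWeight_div_inv p.2).symm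

lemma twinC_pos : 0 < twinC :=
  twinC_eq_inv_tsum ▸ inv_pos.2 tsum_squarefreeProd_twinWeight_div_pos

lemma two_mul_twinC_mul_tsum_twinCoeff_div : 2 * twinC * ∑' n : ℕ, twinCoeff n / n = 1 := by
  have hK := tsum_squarefreeProd_twinWeight_div_pos.ne'
  have htwo : HasProd (fun p : Nat.Primes ↦ if (p : ℕ) = 2 then (2⁻¹ : ℝ) else 1) 2⁻¹ := by
    simpa using hasProd_single (f := fun p : Nat.Primes ↦ if (p : ℕ) = 2 then (2⁻¹ : ℝ) else 1)
      ⟨2, Nat.prime_two⟩ fun p hp ↦ if_neg fun h ↦ hp (Subtype.ext h)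
  have htsum : ∑' n : ℕ, twinCoeff n / n
      = (∑' n : ℕ, squarefreeProd twinWeight n / n) * 2⁻¹ := by
    refine (hasProd_one_sub_inv_mul_one_add_div summable_abs_twinCoeff_div).unique ?_
    convert (hasProd_one_add_div summable_abs_squarefreeProd_twinWeight_div).mul htwo using 2 with p
    have hp0 : (p : ℝ) ≠ 0 := by exact_mod_cast p.2.ne_zero
    rw [mul_div_cancel_left₀ _ hp0, one_sub_inv_mul_one_add_twinWeight p.2]
  rw [htsum, twinC_eq_inv_tsum]
  field_simp

end TwinWeight

section EvenModulus

lemma one_add_twinWeight_eq_ite {p : ℕ} (hp : p.Prime) :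
    1 + twinWeight p = if 2 < p then ((p : ℝ) - 1) / (p - 2) else 1 := by
  split_ifs with h
  · have hp3 : (3 : ℝ) ≤ p := by exact_mod_cast h
    have hp2 : (p : ℝ) - 2 ≠ 0 := by linarith
    rw [twinWeight]
    field_simp
    ring
  · simp [le_antisymm (not_lt.1 h) hp.two_le, twinWeight_two]

lemma singSeries_of_even {k : ℕ} (hk : Even k) (hk0 : k ≠ 0) :
    singSeries k = 2 * twinC * ∏ p ∈ k.primeFactors, (1 + twinWeight p) := by
  rw [singSeries, if_pos ⟨hk.two_dvd, hk0⟩, prod_filter]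
  congr 1
  exact prod_congr rfl fun p hp ↦
    (one_add_twinWeight_eq_ite (Nat.prime_of_mem_primeFactors hp)).symm

/-- The product over `p ∈ s` of the local factors `(p - 1) / (p - 2)` of the singular series; for
`s = q.primeFactors` it is the part of `𝔖(jq)` that does not depend on `j`. -/
noncomputable def twinFactor (s : Finset ℕ) : ℝ := ∏ p ∈ s, (1 + twinWeight p)

lemma singSeries_mul_of_even {q j : ℕ} (hq : Even q) (hq0 : q ≠ 0) (hj : j ≠ 0) :
    singSeries (j * q) = 2 * twinC * twinFactor q.primeFactors *
      ∑ d ∈ j.divisors, twinSieve q.primeFactors d := by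
  rw [singSeries_of_even (hq.mul_left j) (mul_ne_zero hj hq0), twinSieve,
    sum_divisors_squarefreeProd _ hj, mul_assoc (2 * twinC) (twinFactor _),
    Nat.primeFactors_mul hj hq0, union_comm, ← union_sdiff_self_eq_union, prod_union disjoint_sdiff,
    sdiff_eq_filter, prod_filter, twinFactor]
  congr 2
  refine prod_congr rfl fun p _ ↦ ?_
  by_cases hp : p ∈ q.primeFactors
  · rw [piecewise_eq_of_mem _ _ _ hp, if_neg (not_not.2 hp), Pi.zero_apply, add_zero]
  · rw [piecewise_eq_of_notMem _ _ _ hp, if_pos hp]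

lemma prod_one_sub_inv_mul_twinFactor {s : Finset ℕ} (hs : ∀ p ∈ s, p.Prime) (h2 : 2 ∈ s) :
    (∏ p ∈ s, (1 - (p : ℝ)⁻¹)) * twinFactor s = (∏ p ∈ s, (1 + twinWeight p / p)) * 2⁻¹ := by
  have hhalf : ∏ p ∈ s, (if p = 2 then (2⁻¹ : ℝ) else 1) = 2⁻¹ := by
    rw [prod_ite_eq' s 2 fun _ ↦ (2⁻¹ : ℝ), if_pos h2]
  rw [← hhalf, twinFactor, ← prod_mul_distrib, ← prod_mul_distrib]
  exact prod_congr rfl fun p hp ↦ one_sub_inv_mul_one_add_twinWeight (hs p hp)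

lemma two_mul_twinC_mul_twinFactor_mul_tsum {q : ℕ} (hq : Even q) (hq0 : q ≠ 0) :
    2 * twinC * twinFactor q.primeFactors * ∑' n : ℕ, twinSieve q.primeFactors n / n
      = q / q.totient := by
  have hs : ∀ p ∈ q.primeFactors, p.Prime := fun _ ↦ Nat.prime_of_mem_primeFactors
  have hφ : (q.totient : ℝ) ≠ 0 := by
    exact_mod_cast (Nat.totient_pos.2 (Nat.pos_of_ne_zero hq0)).ne'
  have htotient : (q.totient : ℝ) = q * ∏ p ∈ q.primeFactors, (1 - (p : ℝ)⁻¹) := by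
    simpa using congrArg (fun r : ℚ ↦ (r : ℝ)) (Nat.totient_eq_mul_prod_factors q)
  have hlocal := prod_one_sub_inv_mul_twinFactor hs
    (Nat.mem_primeFactors.2 ⟨Nat.prime_two, hq.two_dvd, hq0⟩)
  have hremoved := prod_mul_tsum_squarefreeProd_piecewise_div (fun _ ↦ twinWeight_nonneg)
    summable_abs_squarefreeProd_twinWeight_div hs
  have htwinC : twinC * ∑' n : ℕ, squarefreeProd twinWeight n / n = 1 := by
    rw [twinC_eq_inv_tsum, inv_mul_cancel₀ tsum_squarefreeProd_twinWeight_div_pos.ne']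
  simp only [twinSieve]
  set K := ∑' n : ℕ, squarefreeProd (q.primeFactors.piecewise 0 twinWeight) n / n
  rw [eq_div_iff hφ, htotient]
  linear_combination 2 * twinC * K * q * hlocal + q * twinC * hremoved + q * htwinC

/-- The factor `∏ (p - 1) / (p - 2) * (1 + ∑ log p / (p - 2))` over `p ∈ s`, which bounds what the
removal of the primes in `s` costs in the error terms. -/
noncomputable def twinCost (s : Finset ℕ) : ℝ :=
  twinFactor s * (1 + ∑ p ∈ s, twinWeight p * Real.log p)

variable {s : Finset ℕ}

lemma one_le_twinFactor (hs : ∀ p ∈ s, p.Prime) : 1 ≤ twinFactor s :=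
  one_le_prod fun p hp ↦ by linarith [twinWeight_nonneg (hs p hp)]

lemma sum_twinWeight_mul_log_nonneg (hs : ∀ p ∈ s, p.Prime) :
    0 ≤ ∑ p ∈ s, twinWeight p * Real.log p :=
  sum_nonneg fun p hp ↦ mul_nonneg (twinWeight_nonneg (hs p hp)) (Real.log_natCast_nonneg p)

lemma twinFactor_le_twinCost (hs : ∀ p ∈ s, p.Prime) : twinFactor s ≤ twinCost s :=
  le_mul_of_one_le_right (zero_le_one.trans (one_le_twinFactor hs))
    (le_add_of_nonneg_right (sum_twinWeight_mul_log_nonneg hs))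

lemma one_le_twinCost (hs : ∀ p ∈ s, p.Prime) : 1 ≤ twinCost s :=
  (one_le_twinFactor hs).trans (twinFactor_le_twinCost hs)

lemma sum_Ioc_squarefreeProd_twinWeight_sub_le (N : ℕ) {p : ℕ} (hp : p.Prime) :
    ∑ n ∈ Ioc 0 N, squarefreeProd twinWeight n - ∑ n ∈ Ioc 0 (N / p), squarefreeProd twinWeight n
      ≤ 3 * (∑' n : ℕ, |twinCoeff n| / n) * Real.log p := by
  have hlog : 1 + Real.log p ≤ 3 * Real.log p := by
    have hlog2 := Real.log_two_gt_d9
    have hlogp : Real.log 2 ≤ Real.log p := Real.log_le_log two_pos (by exact_mod_cast hp.two_le)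
    linarith
  simp only [← sum_Ioc_twinCoeff_mul_zeta_div]
  refine (sum_Ioc_mul_zeta_div_sub_le summable_abs_twinCoeff_div N hp.ne_zero).trans ?_
  rw [mul_right_comm]
  gcongr

lemma twinFactor_mul_sum_twinSieve_sub_mem_Icc (hs : ∀ p ∈ s, p.Prime) (N : ℕ) :
    twinFactor s * ∑ n ∈ Ioc 0 N, twinSieve s n - ∑ n ∈ Ioc 0 N, squarefreeProd twinWeight n
      ∈ Set.Icc 0 (3 * (∑' n : ℕ, |twinCoeff n| / n) * twinCost s) := by
  have : 0 ≤ 3 * ∑' n : ℕ, |twinCoeff n| / n :=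
    mul_nonneg zero_le_three (tsum_nonneg fun _ ↦ by positivity)
  obtain ⟨hnonneg, hle⟩ := prod_mul_sum_Ioc_squarefreeProd_piecewise_mem_Icc
    (fun _ ↦ twinWeight_nonneg) (fun _ N hp ↦ sum_Ioc_squarefreeProd_twinWeight_sub_le N hp) N hs
  refine ⟨hnonneg, hle.trans ?_⟩
  calc twinFactor s * ∑ p ∈ s, twinWeight p * (3 * (∑' n : ℕ, |twinCoeff n| / n) * Real.log p)
      = 3 * (∑' n : ℕ, |twinCoeff n| / n)
          * (twinFactor s * ∑ p ∈ s, twinWeight p * Real.log p) := by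
        simp_rw [mul_left_comm (twinWeight _), ← mul_sum]
        rw [mul_left_comm]
    _ ≤ 3 * (∑' n : ℕ, |twinCoeff n| / n) * twinCost s := by
        have hP := one_le_twinFactor hs
        rw [twinCost]
        gcongr
        linarith

lemma exists_abs_twinFactor_mul_sum_twinSieve_sub_log_le :
    ∃ A : ℝ, 0 ≤ A ∧ ∀ s : Finset ℕ, (∀ p ∈ s, p.Prime) → ∀ x : ℝ, Real.exp (-1) ≤ x →
      |2 * twinC * (twinFactor s * ∑ n ∈ Ioc 0 ⌊x⌋₊, twinSieve s n) - Real.log x|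
        ≤ A * twinCost s := by
  set D := ∑' n : ℕ, |twinCoeff n| / n
  set E := ∑' n : ℕ, |twinCoeff n| / n * (1 + Real.log n)
  have : 0 ≤ D := tsum_nonneg fun _ ↦ by positivity
  have hE : 0 ≤ E := tsum_nonneg fun n ↦
    mul_nonneg (by positivity) (by linarith [Real.log_natCast_nonneg n])
  have htwinC := twinC_pos
  refine ⟨2 * twinC * (3 * D + E), by positivity, fun s hs x hx ↦ ?_⟩
  obtain ⟨hremove0, hremove⟩ := twinFactor_mul_sum_twinSieve_sub_mem_Icc hs ⌊x⌋₊
  have hmain := abs_sum_Ioc_mul_zeta_div_sub_le summable_abs_twinCoeff_div_mul_log hx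
  rw [sum_Ioc_twinCoeff_mul_zeta_div] at hmain
  set G := twinFactor s * ∑ n ∈ Ioc 0 ⌊x⌋₊, twinSieve s n
  have hbound : |G - (∑' n : ℕ, twinCoeff n / n) * Real.log x| ≤ (3 * D + E) * twinCost s := by
    have hcost : E ≤ E * twinCost s :=
      le_mul_of_one_le_right hE (one_le_twinCost hs)
    rw [abs_le] at hmain ⊢
    constructor <;> linarith
  calc |2 * twinC * G - Real.log x|
      = |2 * twinC * (G - (∑' n : ℕ, twinCoeff n / n) * Real.log x)| := by
        rw [mul_sub, ← mul_assoc _ (∑' n : ℕ, twinCoeff n / n),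
          two_mul_twinC_mul_tsum_twinCoeff_div, one_mul]
    _ = 2 * twinC * |G - (∑' n : ℕ, twinCoeff n / n) * Real.log x| := by
        rw [abs_mul, abs_of_pos (by positivity)]
    _ ≤ 2 * twinC * (3 * D + E) * twinCost s := by
        rw [mul_assoc _ (3 * D + E)]
        gcongr

lemma sum_singSeries_eq_of_even {q : ℕ} (hq : Even q) (hq0 : q ≠ 0) (h : ℝ) (N : ℕ) :
    ∑ j ∈ Icc 1 N, (h - j * q) * singSeries (j * q) = q * (2 * twinC * twinFactor q.primeFactors) *
      ∑ j ∈ Ioc 0 N, (h / q - j) * ∑ d ∈ j.divisors, twinSieve q.primeFactors d := by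
  have hq0' : (q : ℝ) ≠ 0 := by exact_mod_cast hq0
  rw [mul_sum]
  refine sum_congr rfl fun j hj ↦ ?_
  have hfactor : h - j * q = q * (h / q - j) := by
    rw [mul_sub, mul_div_cancel₀ h hq0', mul_comm (q : ℝ)]
  rw [singSeries_mul_of_even hq hq0 (mem_Ioc.1 hj).1.ne', hfactor]
  ring

lemma sum_singSeries_sub_eq_of_even {q : ℕ} (hq : Even q) (hq0 : q ≠ 0) (h : ℝ) (N : ℕ) :
    ∑ j ∈ Icc 1 N, (h - j * q) * singSeries (j * q)
        - h ^ 2 / (2 * q.totient) + h / 2 * Real.log (h / q)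
      = q * (2 * twinC * twinFactor q.primeFactors) *
          (∑ j ∈ Ioc 0 N, (h / q - j) * ∑ d ∈ j.divisors, twinSieve q.primeFactors d
            - ((h / q) ^ 2 / 2 * ∑' n : ℕ, twinSieve q.primeFactors n / n
              - h / q / 2 * ∑ n ∈ Ioc 0 N, twinSieve q.primeFactors n))
        - h / 2 * (2 * twinC * (twinFactor q.primeFactors *
            ∑ n ∈ Ioc 0 N, twinSieve q.primeFactors n) - Real.log (h / q)) := by
  have hq0' : (q : ℝ) ≠ 0 := by exact_mod_cast hq0
  have hmain : h ^ 2 / (2 * q.totient) = h ^ 2 / (2 * q) *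
      (2 * twinC * twinFactor q.primeFactors * ∑' n : ℕ, twinSieve q.primeFactors n / n) := by
    rw [two_mul_twinC_mul_twinFactor_mul_tsum hq hq0]
    field_simp
  rw [sum_singSeries_eq_of_even hq hq0, hmain]
  field_simp
  ring

lemma exists_abs_sum_singSeries_sub_le_of_even :
    ∃ A : ℝ, 0 ≤ A ∧ ∀ q : ℕ, q ≠ 0 → Even q → ∀ h : ℝ, q ≤ 2 * h →
      |∑ j ∈ Icc 1 ⌊h / q⌋₊, (h - j * q) * singSeries (j * q)
          - h ^ 2 / (2 * q.totient) + h / 2 * Real.log (h / q)|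
        ≤ A * h * twinCost q.primeFactors := by
  obtain ⟨A, hA, hlog⟩ := exists_abs_twinFactor_mul_sum_twinSieve_sub_log_le
  have htwinC := twinC_pos
  set D := ∑' n : ℕ, |twinCoeff n| / n
  have : 0 ≤ D := tsum_nonneg fun _ ↦ by positivity
  refine ⟨2 * twinC * D + A, by positivity, fun q hq0 hq h hqh ↦ ?_⟩
  rw [sum_singSeries_sub_eq_of_even hq hq0]
  set s := q.primeFactors
  have hs (p : ℕ) (hp : p ∈ s) : p.Prime := Nat.prime_of_mem_primeFactors hp
  have hqpos : (0 : ℝ) < q := by positivity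
  have hh : 0 < h := by linarith
  have hx : Real.exp (-1) ≤ h / q := by
    rw [le_div_iff₀ hqpos]
    nlinarith [Real.exp_neg_one_lt_half]
  have hP : 0 < twinFactor s := zero_lt_one.trans_le (one_le_twinFactor hs)
  have hcost : twinFactor s ≤ twinCost s := twinFactor_le_twinCost hs
  have hcost0 : 0 ≤ twinCost s := zero_le_one.trans (one_le_twinCost hs)
  have hweighted := abs_sum_Ioc_sub_mul_sum_divisors_sub_le summable_abs_twinCoeff_div
    (twinSieve_nonneg s) (natCast_mul_twinSieve_le s) (by positivity : 0 ≤ h / q)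
  calc _ ≤ q * (2 * twinC * twinFactor s) * _ + h / 2 * _ := by
        refine (abs_sub _ _).trans_eq ?_
        rw [abs_mul ((q : ℝ) * _), abs_mul (h / 2), abs_of_pos (half_pos hh),
          abs_of_pos (by positivity : 0 < q * (2 * twinC * twinFactor s))]
    _ ≤ q * (2 * twinC * twinCost s) * (D * (h / q)) + h / 2 * (A * twinCost s) := by
        gcongr
        exact hlog s hs _ hx
    _ = 2 * twinC * D * h * twinCost s + A * h * twinCost s / 2 := by field_simp
    _ ≤ (2 * twinC * D + A) * h * twinCost s := by
        have : 0 ≤ A * h * twinCost s := by positivity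
        linarith

end EvenModulus

section OddModulus

lemma singSeries_of_odd {k : ℕ} (hk : Odd k) : singSeries k = 0 :=
  if_neg fun h ↦ Nat.not_even_iff_odd.2 hk (even_iff_two_dvd.2 h.1)

lemma sum_singSeries_eq_of_odd {q : ℕ} (hq : Odd q) (h : ℝ) (N : ℕ) :
    ∑ j ∈ Icc 1 N, (h - j * q) * singSeries (j * q)
      = ∑ j ∈ Icc 1 (N / 2), (h - j * (2 * q : ℕ)) * singSeries (j * (2 * q)) := by
  calc ∑ j ∈ Ioc 0 N, (h - j * q) * singSeries (j * q)
      = ∑ j ∈ Ioc 0 N with 2 ∣ j, (h - j * q) * singSeries (j * q) := by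
        refine (sum_filter_of_ne fun j _ hj ↦ ?_).symm
        contrapose! hj
        rw [singSeries_of_odd ((Nat.odd_iff.2 (Nat.two_dvd_ne_zero.1 hj)).mul hq), mul_zero]
    _ = ∑ j ∈ Ioc 0 (N / 2), (h - (2 * j : ℕ) * q) * singSeries (2 * j * q) :=
        sum_Ioc_filter_dvd _ two_pos N
    _ = _ := by
        refine sum_congr rfl fun j _ ↦ ?_
        rw [mul_left_comm j 2 q, ← mul_assoc 2 j q]
        push_cast
        ring

lemma twinCost_insert_two (s : Finset ℕ) : twinCost (insert 2 s) = twinCost s := by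
  rw [twinCost, twinCost, twinFactor, prod_insert_one (by rw [twinWeight_two, add_zero]),
    sum_insert_zero (by rw [twinWeight_two, zero_mul]), twinFactor]

lemma exists_abs_sum_singSeries_sub_le :
    ∃ A : ℝ, 0 ≤ A ∧ ∀ q : ℕ, q ≠ 0 → ∀ h : ℝ, q ≤ h →
      |∑ j ∈ Icc 1 ⌊h / q⌋₊, (h - j * q) * singSeries (j * q)
          - h ^ 2 / (2 * q.totient) + h / 2 * Real.log (h / q)|
        ≤ A * h * twinCost q.primeFactors := by
  obtain ⟨A, hA, heven⟩ := exists_abs_sum_singSeries_sub_le_of_even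
  refine ⟨A + 1, by positivity, fun q hq0 h hqh ↦ ?_⟩
  have hqpos : (0 : ℝ) < q := by positivity
  have hh : 0 < h := hqpos.trans_le hqh
  have hs (p : ℕ) (hp : p ∈ q.primeFactors) : p.Prime := Nat.prime_of_mem_primeFactors hp
  have hcost := one_le_twinCost hs
  rcases q.even_or_odd with hq | hq
  · refine (heven q hq0 hq h (by linarith)).trans ?_
    gcongr
    linarith
  · have hdouble := heven (2 * q) (by positivity) (even_two_mul q) h (by push_cast; linarith)
    have hfloor : ⌊h / (2 * q : ℕ)⌋₊ = ⌊h / q⌋₊ / 2 := by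
      rw [Nat.cast_mul, mul_comm, ← div_div, ← Nat.floor_div_natCast]
    have hlog : Real.log (h / (2 * q : ℕ)) = Real.log (h / q) - Real.log 2 := by
      rw [← Real.log_div (by positivity) two_ne_zero, Nat.cast_mul, mul_comm, div_div,
        Nat.cast_two]
    rw [hfloor, ← sum_singSeries_eq_of_odd hq, hlog, Nat.totient_two_mul_of_odd hq,
      Nat.primeFactors_mul two_ne_zero hq0, Nat.prime_two.primeFactors, singleton_union,
      twinCost_insert_two] at hdouble
    have hlog2 : |h / 2 * Real.log 2| ≤ 1 * h * twinCost q.primeFactors := by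
      rw [abs_of_pos (by positivity), one_mul]
      nlinarith [Real.log_two_lt_d9]
    calc _ = |∑ j ∈ Icc 1 ⌊h / q⌋₊, (h - j * q) * singSeries (j * q) - h ^ 2 / (2 * q.totient)
            + h / 2 * (Real.log (h / q) - Real.log 2) + h / 2 * Real.log 2| := by
          rw [mul_sub, add_assoc, sub_add_cancel]
      _ ≤ A * h * twinCost q.primeFactors + 1 * h * twinCost q.primeFactors :=
        (abs_add_le _ _).trans (add_le_add hdouble hlog2)
      _ = (A + 1) * h * twinCost q.primeFactors := by ring

end OddModulus

section Mertens

lemma sum_Ioc_log_le (n : ℕ) : ∑ m ∈ Ioc 0 n, Real.log m ≤ n * Real.log n := by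
  refine (sum_le_card_nsmul _ _ (Real.log n) fun m hm ↦ ?_).trans_eq (by simp)
  obtain ⟨hm0, hmn⟩ := mem_Ioc.1 hm
  exact Real.log_le_log (by exact_mod_cast hm0) (by exact_mod_cast hmn)

lemma sum_primesLE_log_mul_div_le (n : ℕ) :
    ∑ p ∈ n.primesLE, Real.log p * (n / p : ℕ) ≤ n * Real.log n := by
  calc ∑ p ∈ n.primesLE, Real.log p * (n / p : ℕ)
      = ∑ p ∈ n.primesLE, Λ p * (n / p : ℕ) :=
        sum_congr rfl fun p hp ↦ by
          rw [vonMangoldt_apply_prime (Nat.prime_of_mem_primesLE hp)]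
    _ ≤ ∑ d ∈ Ioc 0 n, Λ d * (n / d : ℕ) := by
        refine sum_le_sum_of_subset_of_nonneg (fun p hp ↦ ?_) fun _ _ _ ↦
          mul_nonneg vonMangoldt_nonneg (Nat.cast_nonneg _)
        obtain ⟨hpn, hp⟩ := Nat.mem_primesLE.1 hp
        exact mem_Ioc.2 ⟨hp.pos, hpn⟩
    _ = ∑ m ∈ Ioc 0 n, Real.log m := by
        rw [← sum_Ioc_mul_zeta_eq_sum, vonMangoldt_mul_zeta]
        rfl
    _ ≤ n * Real.log n := sum_Ioc_log_le n

lemma sum_primesLE_log_div_le (n : ℕ) :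
    ∑ p ∈ n.primesLE, Real.log p / p ≤ Real.log n + Real.log 4 := by
  rcases n.eq_zero_or_pos with rfl | hn
  · simpa using Real.log_nonneg (by norm_num)
  have hn0 : (0 : ℝ) < n := by exact_mod_cast hn
  refine le_of_mul_le_mul_left ?_ hn0
  calc n * ∑ p ∈ n.primesLE, Real.log p / p
      = ∑ p ∈ n.primesLE, Real.log p * (n / p) := by
        rw [mul_sum]
        exact sum_congr rfl fun p _ ↦ by ring
    _ ≤ ∑ p ∈ n.primesLE, (Real.log p * (n / p : ℕ) + Real.log p) := by
        gcongr
        rw [← mul_add_one]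
        gcongr
        rw [← Nat.floor_div_eq_div (K := ℝ)]
        exact (Nat.lt_floor_add_one _).le
    _ = ∑ p ∈ n.primesLE, Real.log p * (n / p : ℕ) + Chebyshev.theta n := by
        rw [sum_add_distrib, Chebyshev.theta_eq_sum_primesLE_log]
    _ ≤ n * Real.log n + Real.log 4 * n :=
        add_le_add (sum_primesLE_log_mul_div_le n) (Chebyshev.theta_le_log4_mul_x hn0.le)
    _ = n * (Real.log n + Real.log 4) := by ring

lemma sum_primesLE_inv_sub_le (n : ℕ) (hn : 2 ≤ n) :
    ∑ p ∈ n.primesLE, (p : ℝ)⁻¹ - (∑ p ∈ n.primesLE, Real.log p / p) / Real.log n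
      ≤ Real.log (Real.log n) - Real.log (Real.log 2)
        + Real.log 4 * ((Real.log 2)⁻¹ - (Real.log n)⁻¹) := by
  induction n, hn using Nat.le_induction with
  | base =>
    have hlog2 : Real.log 2 ≠ 0 := (Real.log_pos one_lt_two).ne'
    have hprimes : Nat.primesLE 2 = {2} := by decide
    rw [hprimes, sum_singleton, sum_singleton, Nat.cast_two, sub_self, sub_self, mul_zero]
    field_simp
    simp
  | succ n hn ih =>
    set a := Real.log n
    set b := Real.log (n + 1 : ℕ)
    have ha : 0 < a := Real.log_pos (by exact_mod_cast hn)
    have hab : a ≤ b := Real.log_le_log (by positivity) (by exact_mod_cast n.le_succ)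
    have hb : 0 < b := ha.trans_le hab
    set S := ∑ p ∈ n.primesLE, Real.log p / p
    have hstep : ∑ p ∈ (n + 1).primesLE, (p : ℝ)⁻¹ - (∑ p ∈ (n + 1).primesLE, Real.log p / p) / b
        = ∑ p ∈ n.primesLE, (p : ℝ)⁻¹ - S / b := by
      rw [Nat.primesLE_succ]
      split_ifs
      · rw [sum_insert (Nat.notMem_primesLE n), sum_insert (Nat.notMem_primesLE n), add_div,
          div_div_cancel_left' hb.ne', add_sub_add_left_eq_sub]
      · rfl
    have hpartial : S * (a⁻¹ - b⁻¹) ≤ (a + Real.log 4) * (a⁻¹ - b⁻¹) :=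
      mul_le_mul_of_nonneg_right (sum_primesLE_log_div_le n) (sub_nonneg.2 (inv_anti₀ ha hab))
    have hloglog : 1 - a / b ≤ Real.log b - Real.log a := by
      rw [← Real.log_div hb.ne' ha.ne', ← inv_div b a]
      exact Real.one_sub_inv_le_log_of_pos (div_pos hb ha)
    have hcancel : a * (a⁻¹ - b⁻¹) = 1 - a / b := by
      rw [mul_sub, mul_inv_cancel₀ ha.ne', div_eq_mul_inv]
    rw [hstep]
    simp only [div_eq_mul_inv] at ih ⊢
    linarith

lemma exists_sum_primesLE_inv_le :
    ∃ K : ℝ, ∀ n : ℕ, 2 ≤ n → ∑ p ∈ n.primesLE, (p : ℝ)⁻¹ ≤ Real.log (Real.log n) + K := by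
  refine ⟨1 - Real.log (Real.log 2) + Real.log 4 * (Real.log 2)⁻¹, fun n hn ↦ ?_⟩
  have hlog : 0 < Real.log n := Real.log_pos (by exact_mod_cast hn)
  have hdiv : (∑ p ∈ n.primesLE, Real.log p / p) / Real.log n
      ≤ 1 + Real.log 4 * (Real.log n)⁻¹ := by
    rw [div_le_iff₀ hlog, add_mul, one_mul, inv_mul_cancel_right₀ hlog.ne']
    exact sum_primesLE_log_div_le n
  linarith [sum_primesLE_inv_sub_le n hn]

end Mertens

section PrimeDivisorSums

lemma sum_primeFactors_log_le {q : ℕ} (hq : q ≠ 0) :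
    ∑ p ∈ q.primeFactors, Real.log p ≤ Real.log q := by
  have hpos (p : ℕ) (hp : p ∈ q.primeFactors) : 0 < p := Nat.pos_of_mem_primeFactors hp
  rw [← Real.log_prod fun p hp ↦ by exact_mod_cast (hpos p hp).ne', ← Nat.cast_prod]
  exact Real.log_le_log (by exact_mod_cast prod_pos hpos)
    (by exact_mod_cast Nat.le_of_dvd (Nat.pos_of_ne_zero hq) (Nat.prod_primeFactors_dvd q))

lemma sum_primeFactors_le_sum_primesLE_add {F : ℕ → ℝ} {K y : ℝ} {q : ℕ}
    (hF : ∀ p : ℕ, p.Prime → 0 ≤ F p) (hFK : ∀ p : ℕ, p.Prime → F p ≤ K * (Real.log p / p))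
    (hK : 0 ≤ K) (hy : 0 < y) (hq : q ≠ 0) (hqy : Real.log q ≤ y) :
    ∑ p ∈ q.primeFactors, F p ≤ ∑ p ∈ ⌊y⌋₊.primesLE, F p + K := by
  rw [← sum_filter_add_sum_filter_not q.primeFactors (· ≤ ⌊y⌋₊)]
  refine add_le_add (sum_le_sum_of_subset_of_nonneg (fun p hp ↦ ?_) fun p hp _ ↦
    hF p (Nat.prime_of_mem_primesLE hp)) ?_
  · obtain ⟨hpq, hpy⟩ := mem_filter.1 hp
    exact Nat.mem_primesLE.2 ⟨hpy, Nat.prime_of_mem_primeFactors hpq⟩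
  · calc ∑ p ∈ q.primeFactors with ¬p ≤ ⌊y⌋₊, F p
        ≤ ∑ p ∈ q.primeFactors with ¬p ≤ ⌊y⌋₊, K / y * Real.log p := by
          refine sum_le_sum fun p hp ↦ ?_
          obtain ⟨hpq, hpy⟩ := mem_filter.1 hp
          have hyp : y ≤ p := (Nat.lt_of_floor_lt (not_le.1 hpy)).le
          have : 0 ≤ Real.log p := Real.log_natCast_nonneg p
          calc F p ≤ K * (Real.log p / p) := hFK p (Nat.prime_of_mem_primeFactors hpq)
            _ ≤ K * (Real.log p / y) := by gcongr
            _ = K / y * Real.log p := by ring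
      _ ≤ K / y * ∑ p ∈ q.primeFactors, Real.log p := by
          rw [mul_sum]
          exact sum_le_sum_of_subset_of_nonneg (filter_subset _ _) fun p _ _ ↦
            mul_nonneg (by positivity) (Real.log_natCast_nonneg p)
      _ ≤ K / y * y := by
          gcongr
          exact (sum_primeFactors_log_le hq).trans hqy
      _ = K := div_mul_cancel₀ K hy.ne'

lemma exists_sum_primesLE_twinWeight_le :
    ∃ K : ℝ, ∀ y : ℝ, 2 ≤ y →
      ∑ p ∈ ⌊y⌋₊.primesLE, twinWeight p ≤ Real.log (Real.log y) + K := by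
  obtain ⟨K, hK⟩ := exists_sum_primesLE_inv_le
  refine ⟨K + 6 * ∑' n : ℕ, ((n : ℝ) ^ 2)⁻¹, fun y hy ↦ ?_⟩
  have hfloor : 2 ≤ ⌊y⌋₊ := Nat.le_floor (by exact_mod_cast hy)
  calc ∑ p ∈ ⌊y⌋₊.primesLE, twinWeight p
      ≤ ∑ p ∈ ⌊y⌋₊.primesLE, ((p : ℝ)⁻¹ + 6 * ((p : ℝ) ^ 2)⁻¹) :=
        sum_le_sum fun p hp ↦ by
          simpa only [div_eq_mul_inv, one_mul] using twinWeight_le (Nat.prime_of_mem_primesLE hp)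
    _ ≤ (Real.log (Real.log ⌊y⌋₊) + K) + 6 * ∑' n : ℕ, ((n : ℝ) ^ 2)⁻¹ := by
        rw [sum_add_distrib, ← mul_sum]
        gcongr
        · exact hK _ hfloor
        · exact (Real.summable_nat_pow_inv.2 one_lt_two).sum_le_tsum _ fun _ _ ↦ by positivity
    _ ≤ Real.log (Real.log y) + (K + 6 * ∑' n : ℕ, ((n : ℝ) ^ 2)⁻¹) := by
        rw [add_assoc]
        gcongr
        · exact Real.log_pos (by exact_mod_cast hfloor)
        · exact Nat.floor_le (by linarith)

lemma twinWeight_le_mul_log_div {p : ℕ} (hp : p.Prime) :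
    twinWeight p ≤ 4 / Real.log 2 * (Real.log p / p) := by
  have : 0 < Real.log 2 := Real.log_pos one_lt_two
  calc twinWeight p ≤ 4 / p := twinWeight_le_four_div hp
    _ = 4 / Real.log 2 * (Real.log 2 / p) := by field_simp
    _ ≤ 4 / Real.log 2 * (Real.log p / p) := by
        gcongr
        exact_mod_cast hp.two_le

lemma twinFactor_le_exp_sum {s : Finset ℕ} (hs : ∀ p ∈ s, p.Prime) :
    twinFactor s ≤ Real.exp (∑ p ∈ s, twinWeight p) := by
  rw [Real.exp_sum]
  exact prod_le_prod (fun p hp ↦ add_nonneg zero_le_one (twinWeight_nonneg (hs p hp)))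
    fun p _ ↦ by linarith [Real.add_one_le_exp (twinWeight p)]

lemma exists_twinFactor_primeFactors_le :
    ∃ K : ℝ, 0 ≤ K ∧ ∀ q : ℕ, q ≠ 0 → ∀ y : ℝ, 2 ≤ y → Real.log q ≤ y →
      twinFactor q.primeFactors ≤ K * Real.log y := by
  obtain ⟨K, hK⟩ := exists_sum_primesLE_twinWeight_le
  refine ⟨Real.exp (K + 4 / Real.log 2), by positivity, fun q hq y hy hqy ↦ ?_⟩
  have hlogy : 0 < Real.log y := Real.log_pos (by linarith)
  have hsum : ∑ p ∈ q.primeFactors, twinWeight p ≤ Real.log (Real.log y) + K + 4 / Real.log 2 :=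
    (sum_primeFactors_le_sum_primesLE_add (fun _ ↦ twinWeight_nonneg)
      (fun _ ↦ twinWeight_le_mul_log_div) (by positivity) (by linarith) hq hqy).trans
      (by linarith [hK y hy])
  calc twinFactor q.primeFactors ≤ Real.exp (∑ p ∈ q.primeFactors, twinWeight p) :=
        twinFactor_le_exp_sum fun p ↦ Nat.prime_of_mem_primeFactors
    _ ≤ Real.exp (K + 4 / Real.log 2 + Real.log (Real.log y)) :=
        Real.exp_le_exp.2 (by linarith)
    _ = Real.exp (K + 4 / Real.log 2) * Real.log y := by rw [Real.exp_add, Real.exp_log hlogy]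

lemma sum_primeFactors_twinWeight_mul_log_le {q : ℕ} (hq : q ≠ 0) {y : ℝ} (hy : 1 ≤ y)
    (hqy : Real.log q ≤ y) :
    ∑ p ∈ q.primeFactors, twinWeight p * Real.log p ≤ 4 * (Real.log y + Real.log 4) + 4 := by
  have hterm (p : ℕ) (hp : p.Prime) : twinWeight p * Real.log p ≤ 4 * (Real.log p / p) := by
    rw [mul_div_left_comm, mul_comm (Real.log p)]
    exact mul_le_mul_of_nonneg_right (twinWeight_le_four_div hp) (Real.log_natCast_nonneg p)
  calc ∑ p ∈ q.primeFactors, twinWeight p * Real.log p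
      ≤ ∑ p ∈ ⌊y⌋₊.primesLE, twinWeight p * Real.log p + 4 :=
        sum_primeFactors_le_sum_primesLE_add
          (fun p hp ↦ mul_nonneg (twinWeight_nonneg hp) (Real.log_natCast_nonneg p))
          hterm zero_le_four (by linarith) hq hqy
    _ ≤ 4 * ∑ p ∈ ⌊y⌋₊.primesLE, Real.log p / p + 4 := by
        rw [mul_sum]
        exact add_le_add_left (sum_le_sum fun p hp ↦ hterm p (Nat.prime_of_mem_primesLE hp)) 4
    _ ≤ 4 * (Real.log ⌊y⌋₊ + Real.log 4) + 4 := by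
        gcongr
        exact sum_primesLE_log_div_le _
    _ ≤ 4 * (Real.log y + Real.log 4) + 4 := by
        gcongr
        · exact_mod_cast Nat.floor_pos.2 hy
        · exact Nat.floor_le (by linarith)

lemma exists_twinCost_primeFactors_le :
    ∃ K : ℝ, 0 ≤ K ∧ ∀ q : ℕ, q ≠ 0 → ∀ y : ℝ, 2 ≤ y → Real.log q ≤ y →
      twinCost q.primeFactors ≤ K * Real.log y ^ 2 := by
  obtain ⟨K, hK, hfactor⟩ := exists_twinFactor_primeFactors_le
  refine ⟨K * 20, by positivity, fun q hq y hy hqy ↦ ?_⟩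
  have hs (p : ℕ) (hp : p ∈ q.primeFactors) : p.Prime := Nat.prime_of_mem_primeFactors hp
  have hlogy : Real.log 2 ≤ Real.log y := Real.log_le_log two_pos hy
  have hlog4 : Real.log 4 = 2 * Real.log 2 := by
    rw [← Real.log_rpow two_pos]
    norm_num
  have hsum : 1 + ∑ p ∈ q.primeFactors, twinWeight p * Real.log p ≤ 20 * Real.log y := by
    linarith [sum_primeFactors_twinWeight_mul_log_le hq (by linarith) hqy, Real.log_two_gt_d9]
  calc twinCost q.primeFactors ≤ K * Real.log y * (20 * Real.log y) :=
        mul_le_mul (hfactor q hq y hy hqy) hsum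
          (add_nonneg zero_le_one (sum_twinWeight_mul_log_nonneg hs))
          (mul_nonneg hK (by linarith [Real.log_two_gt_d9]))
    _ = K * 20 * Real.log y ^ 2 := by ring

lemma log_log_three_pos : 0 < Real.log (Real.log 3) :=
  Real.log_pos ((Real.lt_log_iff_exp_lt three_pos).2 Real.exp_one_lt_three)

lemma log_log_three_le {q : ℕ} (hq : q ≠ 0) :
    Real.log (Real.log 3) ≤ Real.log (Real.log (3 * q)) := by
  have hq1 : (1 : ℝ) ≤ q := by exact_mod_cast Nat.one_le_iff_ne_zero.2 hq
  have : 0 < Real.log 3 := Real.log_pos (by norm_num)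
  gcongr
  linarith

lemma log_log_sq_le {q : ℕ} (hq : q ≠ 0) :
    Real.log (Real.log (3 * q)) ^ 2
      ≤ Real.log (Real.log (3 * q)) ^ 3 / Real.log (Real.log 3) := by
  rw [le_div_iff₀ log_log_three_pos, pow_succ _ 2]
  exact mul_le_mul_of_nonneg_left (log_log_three_le hq) (sq_nonneg _)

lemma exists_twinCost_primeFactors_le_log_log :
    ∃ K : ℝ, 0 ≤ K ∧ ∀ q : ℕ, q ≠ 0 →
      twinCost q.primeFactors ≤ K * Real.log (Real.log (3 * q)) ^ 2 := by
  obtain ⟨K, hK, hcost⟩ := exists_twinCost_primeFactors_le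
  have hpos := log_log_three_pos
  have : 0 < Real.log 2 := Real.log_pos one_lt_two
  refine ⟨K * (1 + Real.log 2 / Real.log (Real.log 3)) ^ 2, by positivity, fun q hq ↦ ?_⟩
  have hL := log_log_three_le hq
  have hq1 : (1 : ℝ) ≤ q := by exact_mod_cast Nat.one_le_iff_ne_zero.2 hq
  have hlog3q : 1 < Real.log (3 * q) :=
    (Real.lt_log_iff_exp_lt (by positivity)).2 (by linarith [Real.exp_one_lt_three])
  have hlogq : Real.log q ≤ Real.log (3 * q) := Real.log_le_log (by positivity) (by linarith)
  refine (hcost q hq (2 * Real.log (3 * q)) (by linarith) (by linarith)).trans ?_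
  rw [mul_assoc, ← mul_pow]
  gcongr
  · exact Real.log_nonneg (by linarith)
  · rw [Real.log_mul two_ne_zero (by positivity), add_mul, one_mul, add_comm, div_mul_eq_mul_div]
    gcongr
    exact (le_div_iff₀ hpos).2 (by gcongr)

end PrimeDivisorSums

theorem lemma7_friedlander_goldston_general :
    ∃ A : ℝ, 0 < A ∧ ∀ q : ℕ, 1 ≤ q → ∀ h : ℝ, q ≤ h →
      |(∑ j ∈ Icc 1 ⌊h / q⌋₊, (h - j * q) * singSeries (j * q))
        - h ^ 2 / (2 * q.totient) + h / 2 * Real.log (h / q)|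
      ≤ A * h * Real.log (Real.log (3 * q)) ^ 2 := by
  obtain ⟨A, hA, hsum⟩ := exists_abs_sum_singSeries_sub_le
  obtain ⟨K, hK, hcost⟩ := exists_twinCost_primeFactors_le_log_log
  refine ⟨A * K + 1, by positivity, fun q hq h hqh ↦ ?_⟩
  have hq0 : q ≠ 0 := Nat.one_le_iff_ne_zero.1 hq
  have hh : 0 ≤ h := q.cast_nonneg.trans hqh
  calc _ ≤ A * h * twinCost q.primeFactors := hsum q hq0 h hqh
    _ ≤ A * h * (K * Real.log (Real.log (3 * q)) ^ 2) := by
        gcongr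
        exact hcost q hq0
    _ = A * K * h * Real.log (Real.log (3 * q)) ^ 2 := by ring
    _ ≤ (A * K + 1) * h * Real.log (Real.log (3 * q)) ^ 2 := by
        gcongr
        linarith

theorem lemma7_friedlander_goldston :
    ∃ A : ℝ, 0 < A ∧ ∀ q h : ℕ, 1 ≤ q → q ≤ h →
      |(∑ j ∈ Finset.Icc 1 (h / q), ((h : ℝ) - (j : ℝ) * q) * singSeries (j * q))
        - (h : ℝ) ^ 2 / (2 * (q.totient : ℝ))
        + ((h : ℝ) / 2) * Real.log ((h : ℝ) / q)|
      ≤ A * h * (Real.log (Real.log (3 * q))) ^ 3 := by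
  obtain ⟨A, hA, hgeneral⟩ := lemma7_friedlander_goldston_general
  refine ⟨A / Real.log (Real.log 3), div_pos hA log_log_three_pos, fun q h hq hqh ↦ ?_⟩
  rw [← Nat.floor_div_eq_div (K := ℝ)]
  refine (hgeneral q hq h (by exact_mod_cast hqh)).trans ?_
  calc A * h * Real.log (Real.log (3 * q)) ^ 2
      ≤ A * h * (Real.log (Real.log (3 * q)) ^ 3 / Real.log (Real.log 3)) := by
        gcongr
        exact log_log_sq_le (Nat.one_le_iff_ne_zero.1 hq)
    _ = A / Real.log (Real.log 3) * h * Real.log (Real.log (3 * q)) ^ 3 := by ring
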